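/- arXiv:math/0509157 — 4 statements merged into one kernel-verified Lean document; each statement's English description precedes it below -/
import Mathlib

section
/- For a variable x and positive integers n, k, the determinant of the matrix indexed by compositions α, β of n into k non-negative parts, with entry ∏_{i=1}^k binom(x+α_i+β_i, β_i), equals (∏_{i=0}^{n-1} (kx+n+k+i)^{binom(k+i-1,k-1)}) / (∏_{i=1}^{n} i^{binom(n+k-i-1,k-1)}). -/
open Finset

/-- The polynomial binomial coefficient `y(y-1)⋯(y-m+1)/m!`. -/
noncomputable def bch {F : Type*} [Field F] (y : F) (m : ℕ) : F :=
  (∏ j ∈ Finset.range m, (y - (j : F))) / (m.factorial : F)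

/-- Compositions of `n` into `k` non-negative parts. -/
abbrev Comp (n k : ℕ) := {f : Fin k → Fin (n + 1) // ∑ i, (f i : ℕ) = n}

/-- Compositions of `n` into `k` strictly positive parts. -/
abbrev CompPos (n k : ℕ) :=
  {f : Fin k → Fin (n + 1) // (∑ i, (f i : ℕ)) = n ∧ ∀ i, 0 < (f i : ℕ)}


namespace CompDet

/-- coefficient of `z^d` in `(1-z)^(-a)`. -/
noncomputable def g {F : Type*} [Field F] (a : F) (d : ℕ) : F := bch (a - 1 + d) d

lemma g_eq {F : Type*} [Field F] (a : F) (d : ℕ) :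
    g a d = (∏ j ∈ Finset.range d, (a + j)) / (d.factorial : F) := by
  unfold g bch
  congr 1
  rw [← Finset.prod_range_reflect]
  refine Finset.prod_congr rfl fun j hj => ?_
  have hj := Finset.mem_range.1 hj
  rw [show d - 1 - j = d - (j + 1) by omega, Nat.cast_sub (by omega)]
  push_cast; ring

lemma g_succ {F : Type*} [Field F] [CharZero F] (a : F) (d : ℕ) :
    ((d : F) + 1) * g a (d + 1) = (a + d) * g a d := by
  rw [g_eq, g_eq, Finset.prod_range_succ, Nat.factorial_succ]
  have h1 : (d.factorial : F) ≠ 0 := by exact_mod_cast d.factorial_ne_zero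
  have h2 : (d : F) + 1 ≠ 0 := by exact_mod_cast d.succ_ne_zero
  push_cast
  field_simp

lemma g_zero {F : Type*} [Field F] (a : F) : g a 0 = 1 := by simp [g_eq]

/-- the power series `(1-z)^(-a)`. -/
noncomputable def gs {F : Type*} [Field F] (a : F) : PowerSeries F := PowerSeries.mk (g a)

lemma gs_add {F : Type*} [Field F] [CharZero F] (a b : F) : gs (a + b) = gs a * gs b := by
  have key : ∀ a : F, PowerSeries.derivative F (gs a) =
      PowerSeries.C a * gs a + PowerSeries.X * PowerSeries.derivative F (gs a) := by
    intro a
    ext d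
    rcases d with _ | d
    · simp [gs, PowerSeries.coeff_derivative]
      have := g_succ a 0
      simpa using this
    · simp only [map_add, PowerSeries.coeff_C_mul, PowerSeries.coeff_succ_X_mul, 
        PowerSeries.coeff_derivative, gs, PowerSeries.coeff_mk]
      have := g_succ a (d+1)
      push_cast at this ⊢
      linear_combination this
  ext d
  have hrec : ∀ d : ℕ, ((d : F) + 1) * PowerSeries.coeff (d+1) (gs a * gs b) =
      (a + b + d) * PowerSeries.coeff d (gs a * gs b) := by
    intro d
    have h : PowerSeries.derivative F (gs a * gs b) = PowerSeries.C (a + b) * (gs a * gs b) + 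
        PowerSeries.X * PowerSeries.derivative F (gs a * gs b) := by
      rw [Derivation.leibniz, smul_eq_mul, smul_eq_mul, map_add]
      linear_combination gs b * key a + gs a * key b
    have h2 := congrArg (PowerSeries.coeff d) h
    rcases d with _ | d
    · rw [PowerSeries.coeff_derivative, map_add, PowerSeries.coeff_C_mul,
        PowerSeries.coeff_zero_X_mul] at h2
      linear_combination h2
    · rw [PowerSeries.coeff_derivative, map_add, PowerSeries.coeff_C_mul,
        PowerSeries.coeff_succ_X_mul, PowerSeries.coeff_derivative] at h2
      push_cast at h2 ⊢
      linear_combination h2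
  induction d with
  | zero => simp [gs, g_zero, PowerSeries.coeff_mul]
  | succ d ih =>
    have h2 : (d : F) + 1 ≠ 0 := by exact_mod_cast d.succ_ne_zero
    apply mul_left_cancel₀ h2
    rw [hrec, ← ih]
    simp only [gs, PowerSeries.coeff_mk]
    exact g_succ _ _

lemma gs_zero {F : Type*} [Field F] : gs (0 : F) = 1 := by
  ext d
  rcases d with _ | d
  · simp [gs, g_zero]
  · simp [gs, g_eq, Finset.prod_range_succ', PowerSeries.coeff_one]

lemma gs_neg_one {F : Type*} [Field F] : gs (-1 : F) = 1 - PowerSeries.X := by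
  ext d
  rcases d with _ | _ | d
  · simp [gs, g_zero]
  · simp [gs, g_eq, PowerSeries.coeff_one]
  · simp [gs, g_eq, Finset.prod_range_succ', PowerSeries.coeff_one, PowerSeries.coeff_X]

section
variable {F : Type*} [Field F] {R : Type*} [CommRing R] [Algebra F R]

/-- `(1-cz)^(-a)` over an `F`-algebra. -/
noncomputable def G (a : F) (c : R) : PowerSeries R :=
  PowerSeries.rescale c (PowerSeries.map (algebraMap F R) (gs a))

lemma coeff_G (a : F) (c : R) (d : ℕ) :
    PowerSeries.coeff d (G a c) = c ^ d * algebraMap F R (g a d) := by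
  simp [G, gs, PowerSeries.coeff_rescale]

lemma G_add [CharZero F] (a b : F) (c : R) : G (a + b) c = G a c * G b c := by
  simp [G, gs_add]

lemma G_zero (c : R) : G (0 : F) c = 1 := by simp [G, gs_zero]

lemma G_neg_one (c : R) : G (-1 : F) c = 1 - PowerSeries.C c * PowerSeries.X := by
  simp [G, gs_neg_one, PowerSeries.rescale_X]

lemma G_one_mul [CharZero F] (c : R) : G (1 : F) c * (1 - PowerSeries.C c * PowerSeries.X) = 1 := by
  rw [← G_neg_one (F := F), ← G_add]; simp [G_zero]

lemma G_nat [CharZero F] (n : ℕ) (c : R) : G (n : F) c = G (1 : F) c ^ n := by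
  induction n with
  | zero => simp [G_zero]
  | succ n ih => rw [Nat.cast_succ, G_add, ih, pow_succ]

lemma G_sub [CharZero F] (c e : R) : G (1 : F) c - G (1 : F) e =
    G (1 : F) c * G (1 : F) e * (PowerSeries.C (c - e) * PowerSeries.X) := by
  have h1 := G_one_mul (F := F) c
  have h2 := G_one_mul (F := F) e
  rw [map_sub]
  linear_combination G (1 : F) e * h1 - G (1 : F) c * h2

lemma map_G {S : Type*} [CommRing S] [Algebra F S] (f : R →ₐ[F] S) (a : F) (c : R) :
    PowerSeries.map (f : R →+* S) (G a c) = G a (f c) := by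
  ext d
  simp [coeff_G]

lemma G_sum [CharZero F] {ι : Type*} (s : Finset ι) (a : ι → F) (c : R) :
    G (∑ i ∈ s, a i) c = ∏ i ∈ s, G (a i) c := by
  classical
  induction s using Finset.induction_on with
  | empty => simp [G_zero]
  | insert i s hi ih => rw [Finset.sum_insert hi, Finset.prod_insert hi, G_add, ih]

end

lemma det_tri {m F : Type*} [Fintype m] [DecidableEq m] [CommRing F] (b : m → ℤ) (A : Matrix m m F)
    (h : ∀ i j, i ≠ j → A i j ≠ 0 → b i < b j) : A.det = ∏ i, A i i := by
  rw [Matrix.det_apply, Finset.sum_eq_single 1]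
  · simp
  · intro σ _ hσ
    rw [smul_eq_zero_iff_eq]
    by_contra hne
    have hall : ∀ i, A (σ i) i ≠ 0 := fun i h0 => hne (Finset.prod_eq_zero (Finset.mem_univ i) h0)
    have hle : ∀ i, b (σ i) ≤ b i := by
      intro i
      by_cases hi : σ i = i
      · rw [hi]
      · exact (h _ _ hi (hall i)).le
    obtain ⟨i, hi⟩ : ∃ i, σ i ≠ i := by
      by_contra! hc
      exact hσ (Equiv.ext hc)
    have : ∑ i, b (σ i) < ∑ i, b i :=
      Finset.sum_lt_sum (fun i _ => hle i) ⟨i, Finset.mem_univ _, h _ _ hi (hall i)⟩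
    rw [Equiv.sum_comp] at this
    exact lt_irrefl _ this
  · simp

/-- composition as a finitely supported function -/
noncomputable def fs {n k : ℕ} (α : Comp n k) : Fin k →₀ ℕ :=
  Finsupp.equivFunOnFinite.symm (fun i => (α.1 i : ℕ))

@[simp] lemma fs_apply {n k : ℕ} (α : Comp n k) (i : Fin k) : fs α i = (α.1 i : ℕ) := rfl

lemma fs_inj {n k : ℕ} : Function.Injective (fs : Comp n k → _) := by
  intro α β h
  apply Subtype.ext
  funext i
  apply Fin.ext
  exact DFunLike.congr_fun h i

lemma fs_degree {n k : ℕ} (α : Comp n k) : (fs α).degree = n := by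
  rw [Finsupp.degree_eq_sum]; exact α.2

lemma exists_fs {n k : ℕ} (s : Fin k →₀ ℕ) (hs : s.degree = n) : ∃ α : Comp n k, fs α = s := by
  rw [Finsupp.degree_eq_sum] at hs
  refine ⟨⟨fun i => ⟨s i, ?_⟩, ?_⟩, ?_⟩
  · have := Finset.single_le_sum (f := fun i => s i) (fun i _ => Nat.zero_le _) (Finset.mem_univ i)
    simp only [hs] at this; omega
  · simpa using hs
  · ext i; simp

lemma hom_sum {F : Type*} [Field F] {n k : ℕ} (p : MvPolynomial (Fin k) F) (hp : p.IsHomogeneous n) :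
    p = ∑ α : Comp n k, MvPolynomial.coeff (fs α) p • MvPolynomial.monomial (fs α) (1 : F) := by
  classical
  ext s
  simp only [MvPolynomial.coeff_sum, MvPolynomial.coeff_smul, MvPolynomial.coeff_monomial]
  by_cases hs : s.degree = n
  · obtain ⟨α, rfl⟩ := exists_fs s hs
    rw [Finset.sum_eq_single α]
    · simp
    · intro β _ hb
      rw [if_neg (fun h => hb (fs_inj h))]; simp
    · simp
  · rw [hp.coeff_eq_zero hs, Finset.sum_eq_zero]
    intro α _
    rw [if_neg]; · simp
    rintro rfl; exact hs (fs_degree α)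

lemma card_ge (n k c : ℕ) (hc : c ≤ n) :
    #{γ : Comp n (k+1) | c ≤ (γ.1 0 : ℕ)} = (n - c + k).choose k := by
  classical
  have h := Finset.card_finsuppAntidiag_nat_eq_choose (s := (Finset.univ : Finset (Fin (k+1)))) (n - c)
  simp only [Finset.card_univ, Fintype.card_fin] at h
  rw [show k + 1 + (n - c) - 1 = n - c + k by omega] at h
  rw [← Nat.choose_symm_add, ← h]
  symm
  have e : ∀ s : Fin (k+1) →₀ ℕ, s ∈ Finset.finsuppAntidiag Finset.univ (n - c) → 
      ∃ γ : Comp n (k+1), fs γ = s + Finsupp.single 0 c := by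
    intro s hs
    apply exists_fs
    rw [map_add, Finsupp.degree_eq_sum, Finsupp.degree_single]
    have : ∑ i, s i = n - c := (Finset.mem_finsuppAntidiag.1 hs).1
    omega
  have : Nonempty (Comp n (k+1)) := by
    obtain ⟨γ, _⟩ := exists_fs (n := n) (Finsupp.single (0 : Fin (k+1)) n) (by simp)
    exact ⟨γ⟩
  choose! f hf using e
  refine Finset.card_bij (fun s _ => f s) ?_ ?_ ?_
  · intro s hs
    simp only [Finset.mem_filter, Finset.mem_univ, true_and]
    rw [← fs_apply, hf s hs]; simp
  · intro s hs t ht hst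
    have := hf s hs
    rw [hst, hf t ht] at this
    exact (add_right_cancel this).symm
  · intro γ hγ
    simp only [Finset.mem_filter, Finset.mem_univ, true_and] at hγ
    have hle : Finsupp.single 0 c ≤ fs γ := by
      rw [Finsupp.single_le_iff]; exact hγ
    have hm : fs γ - Finsupp.single 0 c ∈ Finset.finsuppAntidiag Finset.univ (n - c) := by
      simp only [Finset.mem_finsuppAntidiag, Finset.subset_univ, and_true]
      change ∑ i, (fs γ - Finsupp.single 0 c : Fin (k+1) →₀ ℕ) i = n - c
      have h1 := fs_degree γ
      rw [← tsub_add_cancel_of_le hle, map_add, Finsupp.degree_eq_sum, Finsupp.degree_single] at h1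
      omega
    refine ⟨_, hm, ?_⟩
    apply fs_inj
    rw [hf _ hm, tsub_add_cancel_of_le hle]


section
variable {F : Type*} [Field F]

open MvPolynomial

/-- The change of variables. -/
noncomputable def Y (F : Type*) [Field F] (k : ℕ) : Fin (k+1) → MvPolynomial (Fin (k+1)) F :=
  Fin.cases (X 0) (fun i => X i.succ - X 0)

/-- The change of variables as an algebra map. -/
noncomputable def phi (F : Type*) [Field F] (k : ℕ) :
    MvPolynomial (Fin (k+1)) F →ₐ[F] MvPolynomial (Fin (k+1)) F := aeval (Y F k)

/-- The endomorphism whose matrix is studied. -/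
noncomputable def Psi (n k : ℕ) (x : F) :
    MvPolynomial (Fin (k+1)) F →ₗ[F] MvPolynomial (Fin (k+1)) F :=
  ((PowerSeries.coeff (R := MvPolynomial (Fin (k+1)) F) n).restrictScalars F) ∘ₗ
    (LinearMap.mulLeft F (∏ i : Fin (k+1),
      G (x+1) (X i : MvPolynomial (Fin (k+1)) F))) ∘ₗ
    (aeval (R := F) (fun i : Fin (k+1) =>
      G (1 : F) (X i : MvPolynomial (Fin (k+1)) F))).toLinearMap

lemma Psi_apply (n k : ℕ) (x : F) (p) : Psi n k x p = PowerSeries.coeff n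
    ((∏ i : Fin (k+1), G (x+1) (X i : MvPolynomial (Fin (k+1)) F)) *
      aeval (R := F) (fun i : Fin (k+1) => G (1 : F) (X i : MvPolynomial (Fin (k+1)) F)) p) := rfl

lemma monomial_one_eq {k : ℕ} (s : Fin k →₀ ℕ) :
    monomial s (1 : F) = ∏ i, (X i : MvPolynomial (Fin k) F) ^ s i := by
  rw [monomial_eq, Finsupp.prod_fintype _ _ (by simp)]; simp

lemma coeff_prod_G {n k : ℕ} (a : Fin k → F) (β : Comp n k) :
    coeff (fs β) (PowerSeries.coeff n (∏ i, G (a i) (X i : MvPolynomial (Fin k) F))) =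
      ∏ i, g (a i) (β.1 i) := by
  classical
  rw [PowerSeries.coeff_prod, coeff_sum, Finset.sum_eq_single (fs β)]
  · simp only [coeff_G]
    rw [Finset.prod_mul_distrib, ← monomial_one_eq]
    simp only [algebraMap_eq]
    rw [← map_prod, mul_comm, coeff_C_mul, coeff_monomial]
    simp
  · intro l _ hl
    simp only [coeff_G]
    rw [Finset.prod_mul_distrib, ← monomial_one_eq]
    simp only [algebraMap_eq]
    rw [← map_prod, mul_comm, coeff_C_mul, coeff_monomial, if_neg hl, mul_zero]
  · intro h
    exfalso; apply h
    rw [Finset.mem_finsuppAntidiag]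
    exact ⟨β.2, Finset.subset_univ _⟩

lemma coeff_Psi [CharZero F] {n k : ℕ} (x : F) (α β : Comp n (k+1)) :
    coeff (fs β) (Psi n k x (monomial (fs α) 1)) =
      ∏ i, bch (x + ((α.1 i : ℕ) : F) + ((β.1 i : ℕ) : F)) ((β.1 i : ℕ)) := by
  rw [Psi_apply, monomial_one_eq, map_prod, ← Finset.prod_mul_distrib]
  simp only [map_pow, aeval_X, ← G_nat, ← G_add, fs_apply]
  rw [coeff_prod_G]
  refine Finset.prod_congr rfl fun i _ => ?_
  rw [g]; congr 1; ring

/-- auxiliary series -/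
noncomputable def Q {n k : ℕ} (x : F) (γ : Comp n (k+1)) :
    PowerSeries (MvPolynomial (Fin (k+1)) F) :=
  G (x + 1 + (n : F)) (X 0) * ∏ i : Fin k, G (x + 1 + ((γ.1 i.succ : ℕ) : F)) (X i.succ + X 0)

/-- image of a basis element in the new coordinates -/
noncomputable def H {n k : ℕ} (x : F) (γ : Comp n (k+1)) : MvPolynomial (Fin (k+1)) F :=
  (∏ i : Fin k, X i.succ ^ (γ.1 i.succ : ℕ)) * PowerSeries.coeff (γ.1 0 : ℕ) (Q x γ)

lemma comp_sum {n k : ℕ} (γ : Comp n (k+1)) : (γ.1 0 : ℕ) + ∑ i : Fin k, (γ.1 i.succ : ℕ) = n := by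
  rw [← Fin.sum_univ_succ (fun i => (γ.1 i : ℕ))]; exact γ.2

lemma phi_monomial {n k : ℕ} (γ : Comp n (k+1)) : phi F k (monomial (fs γ) 1) =
    X 0 ^ (γ.1 0 : ℕ) * ∏ i : Fin k, (X i.succ - X 0) ^ (γ.1 i.succ : ℕ) := by
  rw [monomial_one_eq, map_prod, Fin.prod_univ_succ]
  simp [phi, Y]

lemma phi_H_aux {R : Type*} [CommRing R] (p : R) (A U B : PowerSeries R) (c m : ℕ) {n : ℕ}
    (h : c + m = n) : p * PowerSeries.coeff c (A * (U ^ c * U ^ m) * B) =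
      PowerSeries.coeff n (A * B * (U ^ c * (U ^ m * (PowerSeries.C p * PowerSeries.X ^ m)))) := by
  subst h
  rw [← PowerSeries.coeff_C_mul, ← PowerSeries.coeff_X_pow_mul _ m]
  congr 1
  ring

lemma phi_H [CharZero F] {n k : ℕ} (x : F) (γ : Comp n (k+1)) :
    phi F k (H x γ) = Psi n k x (phi F k (monomial (fs γ) 1)) := by
  have hs := comp_sum γ
  have hL : phi F k (H x γ) = (∏ i : Fin k, (X i.succ - X 0) ^ (γ.1 i.succ : ℕ)) *
      PowerSeries.coeff (γ.1 0 : ℕ) (G (x + 1 + (n : F)) (X 0) *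
        ∏ i : Fin k, G (x + 1 + ((γ.1 i.succ : ℕ) : F)) (X i.succ : MvPolynomial (Fin (k+1)) F)) := by
    rw [H, map_mul]
    congr 1
    · simp [phi, Y]
    · have : phi F k (PowerSeries.coeff (γ.1 0 : ℕ) (Q x γ)) =
        PowerSeries.coeff (γ.1 0 : ℕ) (PowerSeries.map (phi F k : _ →+* _) (Q x γ)) := by
        rw [PowerSeries.coeff_map]; rfl
      rw [this, Q, map_mul, map_prod]
      simp only [map_G]
      simp [phi, Y]
  rw [hL, Psi_apply, phi_monomial]
  simp only [map_mul, map_prod, map_pow, aeval_X, map_sub, G_sub]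
  simp only [mul_pow, Finset.prod_mul_distrib, Finset.prod_pow_eq_pow_sum]
  rw [Fin.prod_univ_succ]
  have hC : ∏ i : Fin k, (PowerSeries.C (X i.succ : MvPolynomial (Fin (k+1)) F) - PowerSeries.C (X 0)) ^ (γ.1 i.succ : ℕ) =
    PowerSeries.C (∏ i : Fin k, (X i.succ - X 0 : MvPolynomial (Fin (k+1)) F) ^ (γ.1 i.succ : ℕ)) := by
    simp
  rw [hC]
  set m := ∑ i : Fin k, (γ.1 i.succ : ℕ)
  have hn : (n : F) = ((γ.1 0 : ℕ) : F) + (m : F) := by exact_mod_cast hs.symm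
  rw [hn, G_add _ (_ + _), G_add ((γ.1 0 : ℕ) : F), G_nat, G_nat]
  simp only [G_add _ ((γ.1 (Fin.succ _) : ℕ) : F), G_nat]
  rw [Finset.prod_mul_distrib]
  refine (phi_H_aux _ _ _ (_ * _) _ _ hs).trans ?_
  refine congrArg _ ?_
  generalize (∏ i : Fin k, G (x+1) (X i.succ : MvPolynomial (Fin (k+1)) F)) = E1
  ac_rfl

lemma sum_coeff {n k : ℕ} (L : MvPolynomial (Fin k) F →ₗ[F] MvPolynomial (Fin k) F)
    (p : MvPolynomial (Fin k) F) (hp : p.IsHomogeneous n) (s : Fin k →₀ ℕ) :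
    ∑ α : Comp n k, coeff (fs α) p * coeff s (L (monomial (fs α) 1)) = coeff s (L p) := by
  conv_rhs => rw [hom_sum p hp]
  simp only [map_sum, map_smul, coeff_sum, coeff_smul, smul_eq_mul]

/-- coefficients of `z^d` are homogeneous of degree `d` -/
def IsHom {k : ℕ} (f : PowerSeries (MvPolynomial (Fin k) F)) : Prop :=
  ∀ d, (PowerSeries.coeff d f).IsHomogeneous d

lemma IsHom.mul {k : ℕ} {f h : PowerSeries (MvPolynomial (Fin k) F)} (hf : IsHom f) (hh : IsHom h) :
    IsHom (f * h) := by
  intro d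
  rw [PowerSeries.coeff_mul]
  refine IsHomogeneous.sum _ _ _ fun p hp => ?_
  rw [← Finset.HasAntidiagonal.mem_antidiagonal.1 hp]
  exact (hf _).mul (hh _)

lemma IsHom.prod {k : ℕ} {ι : Type*} (s : Finset ι) (f : ι → PowerSeries (MvPolynomial (Fin k) F))
    (hf : ∀ i, IsHom (f i)) : IsHom (∏ i ∈ s, f i) := by
  classical
  induction s using Finset.induction_on with
  | empty =>
    intro d
    rw [Finset.prod_empty, PowerSeries.coeff_one]
    split_ifs with h
    · subst h; exact isHomogeneous_one _ _
    · exact isHomogeneous_zero _ _ _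
  | insert i s hi ih => rw [Finset.prod_insert hi]; exact (hf i).mul ih

lemma isHom_G {k : ℕ} (a : F) (c : MvPolynomial (Fin k) F) (hc : c.IsHomogeneous 1) :
    IsHom (G a c) := by
  intro d
  rw [coeff_G, algebraMap_eq]
  simpa using (hc.pow d).mul (isHomogeneous_C (Fin k) (g a d))

lemma isHom_Q {n k : ℕ} (x : F) (γ : Comp n (k+1)) : IsHom (Q x γ) := by
  refine IsHom.mul (isHom_G _ _ (isHomogeneous_X _ _)) (IsHom.prod _ _ fun i => isHom_G _ _ ?_)
  exact (isHomogeneous_X _ _).add (isHomogeneous_X _ _)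

lemma hom_cast {k d n : ℕ} {p : MvPolynomial (Fin k) F} (h : p.IsHomogeneous d) (e : d = n) :
    p.IsHomogeneous n := e ▸ h

lemma hom_H {n k : ℕ} (x : F) (γ : Comp n (k+1)) : (H x γ).IsHomogeneous n := by
  have h : (H x γ).IsHomogeneous ((∑ i : Fin k, (γ.1 i.succ : ℕ)) + (γ.1 0 : ℕ)) := by
    refine IsHomogeneous.mul ?_ (isHom_Q x γ _)
    exact IsHomogeneous.prod _ _ _ fun i _ => isHomogeneous_X_pow _ _
  exact hom_cast h (by rw [add_comm]; exact comp_sum γ)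

lemma hom_phi {n k : ℕ} (γ : Comp n (k+1)) : (phi F k (monomial (fs γ) 1)).IsHomogeneous n := by
  rw [phi_monomial]
  suffices h : (X 0 ^ (γ.1 0 : ℕ) * ∏ i : Fin k, (X i.succ - X 0 : MvPolynomial (Fin (k+1)) F)
      ^ (γ.1 i.succ : ℕ)).IsHomogeneous ((γ.1 0 : ℕ) + ∑ i : Fin k, (γ.1 i.succ : ℕ)) from
    hom_cast h (comp_sum γ)
  refine IsHomogeneous.mul (isHomogeneous_X_pow _ _) ?_
  refine IsHomogeneous.prod _ _ _ fun i _ => ?_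
  simpa using ((isHomogeneous_X F i.succ).sub (isHomogeneous_X F 0)).pow (γ.1 i.succ : ℕ)

/-- inverse change of variables -/
noncomputable def phi' (F : Type*) [Field F] (k : ℕ) :
    MvPolynomial (Fin (k+1)) F →ₐ[F] MvPolynomial (Fin (k+1)) F :=
  aeval (Fin.cases (X 0) (fun i => X i.succ + X 0) : Fin (k+1) → MvPolynomial (Fin (k+1)) F)

lemma phi'_phi (k : ℕ) (p) : phi' F k (phi F k p) = p := by
  have : (phi' F k).comp (phi F k) = AlgHom.id F _ := by
    apply MvPolynomial.algHom_ext
    intro i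
    refine Fin.cases ?_ (fun i => ?_) i <;> simp [phi, phi', Y]
  exact DFunLike.congr_fun this p

/-- The transition matrix. -/
noncomputable def Pm (F : Type*) [Field F] (n k : ℕ) : Matrix (Comp n (k+1)) (Comp n (k+1)) F :=
  Matrix.of fun γ α => coeff (fs α) (phi F k (monomial (fs γ) 1))

lemma det_Pm (n k : ℕ) : (Pm F n k).det ≠ 0 := by
  classical
  have : Pm F n k * (Matrix.of fun γ α => coeff (fs α) (phi' F k (monomial (fs γ) 1))) = 1 := by
    ext γ β
    rw [Matrix.mul_apply]
    simp only [Pm, Matrix.of_apply]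
    have := sum_coeff (phi' F k).toLinearMap (phi F k (monomial (fs γ) 1)) (hom_phi γ) (fs β)
    simp only [AlgHom.toLinearMap_apply] at this
    rw [this, phi'_phi, coeff_monomial, Matrix.one_apply]
    simp [fs_inj.eq_iff]
  intro h0
  have h := congrArg Matrix.det this
  rw [Matrix.det_mul, h0] at h
  simp at h

/-- The triangular matrix. -/
noncomputable def Tm (n k : ℕ) (x : F) : Matrix (Comp n (k+1)) (Comp n (k+1)) F :=
  Matrix.of fun γ δ => coeff (fs δ) (H x γ)

lemma det_eq [CharZero F] (n k : ℕ) (x : F) :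
    Matrix.det (Matrix.of fun α β : Comp n (k+1) =>
        ∏ i, bch (x + ((α.1 i : ℕ) : F) + ((β.1 i : ℕ) : F)) ((β.1 i : ℕ))) = (Tm n k x).det := by
  have h : Pm F n k * (Matrix.of fun α β : Comp n (k+1) =>
        ∏ i, bch (x + ((α.1 i : ℕ) : F) + ((β.1 i : ℕ) : F)) ((β.1 i : ℕ))) =
      Tm n k x * Pm F n k := by
    ext γ β
    rw [Matrix.mul_apply, Matrix.mul_apply]
    simp only [Pm, Tm, Matrix.of_apply, ← coeff_Psi]
    rw [sum_coeff _ _ (hom_phi γ), ← phi_H]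
    exact (sum_coeff (phi F k).toLinearMap _ (hom_H x γ) _).symm
  have h2 := congrArg Matrix.det h
  rw [Matrix.det_mul, Matrix.det_mul, mul_comm] at h2
  exact mul_right_cancel₀ (det_Pm n k) h2

/-- exponent with zeroth part removed -/
noncomputable def tl {n k : ℕ} (γ : Comp n (k+1)) : Fin (k+1) →₀ ℕ :=
  Finsupp.equivFunOnFinite.symm (Fin.cases 0 (fun i => (γ.1 i.succ : ℕ)))

lemma H_eq {n k : ℕ} (x : F) (γ : Comp n (k+1)) :
    H x γ = monomial (tl γ) 1 * PowerSeries.coeff (γ.1 0 : ℕ) (Q x γ) := by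
  rw [H, monomial_one_eq, Fin.prod_univ_succ]
  simp [tl]

lemma coeff_single {k d : ℕ} (p : MvPolynomial (Fin (k+1)) F) (hp : p.IsHomogeneous d) :
    coeff (Finsupp.single 0 d) p = aeval (Fin.cases 1 (fun _ => 0) : Fin (k+1) → F) p := by
  classical
  rw [aeval_eq_eval, eval_eq', Finset.sum_eq_single (Finsupp.single 0 d)]
  · simp [Fin.prod_univ_succ]
  · intro s hs hne
    have hd : s.degree = d := by
      by_contra h
      exact (mem_support_iff.1 hs) (hp.coeff_eq_zero h)
    rw [Fin.prod_univ_succ]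
    obtain ⟨i, hi⟩ : ∃ i : Fin k, s i.succ ≠ 0 := by
      by_contra! h
      apply hne
      rw [Finsupp.degree_eq_sum, Fin.sum_univ_succ] at hd
      simp [h] at hd
      ext j
      refine Fin.cases ?_ (fun j => ?_) j
      · simpa using hd
      · simp [h]
    rw [Finset.prod_eq_zero (Finset.mem_univ i)]
    · simp
    · simp [hi]
  · intro h
    rw [notMem_support_iff.1 h]; simp

lemma Tm_diag [CharZero F] {n k : ℕ} (x : F) (γ : Comp n (k+1)) :
    Tm n k x γ γ = g ((k + 1) * x + (k + 1) + 2 * n - ((γ.1 0 : ℕ) : F)) (γ.1 0 : ℕ) := by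
  classical
  have hle : tl γ ≤ fs γ := by
    intro i
    refine Fin.cases ?_ (fun i => ?_) i <;> simp [tl]
  have hsub : fs γ - tl γ = Finsupp.single 0 (γ.1 0 : ℕ) := by
    ext i
    refine Fin.cases ?_ (fun i => ?_) i <;> simp [tl]
  rw [Tm, Matrix.of_apply, H_eq, coeff_monomial_mul', if_pos hle, one_mul, hsub,
    coeff_single _ (isHom_Q x γ _)]
  set e := aeval (R := F) (Fin.cases 1 (fun _ => 0) : Fin (k+1) → F)
  have : e (PowerSeries.coeff (γ.1 0 : ℕ) (Q x γ)) =
      PowerSeries.coeff (γ.1 0 : ℕ) (PowerSeries.map (e : _ →+* _) (Q x γ)) := by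
    rw [PowerSeries.coeff_map]; rfl
  rw [this, Q, map_mul, map_prod]
  simp only [map_G, map_add]
  have e0 : e (X 0) = 1 := by simp [e]
  have e1 : ∀ i : Fin k, e (X i.succ) = 0 := by intro i; simp [e]
  simp only [e0, e1, zero_add]
  rw [← G_sum, ← G_add, coeff_G]
  have hs := congrArg (Nat.cast (R := F)) (comp_sum γ)
  push_cast at hs
  simp only [one_pow, one_mul, Algebra.algebraMap_self, RingHom.id_apply, Finset.sum_add_distrib]
  congr 1
  simp only [Finset.sum_const, Finset.card_univ, Fintype.card_fin, nsmul_eq_mul]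
  linear_combination hs

lemma det_Tm [CharZero F] (n k : ℕ) (x : F) : (Tm n k x).det =
    ∏ γ : Comp n (k+1), g ((k + 1) * x + (k + 1) + 2 * n - ((γ.1 0 : ℕ) : F)) (γ.1 0 : ℕ) := by
  classical
  rw [det_tri (fun γ : Comp n (k+1) => -((γ.1 0 : ℕ) : ℤ)) (Tm n k x)]
  · exact Finset.prod_congr rfl fun γ _ => Tm_diag x γ
  · intro γ δ hne h0
    rw [Tm, Matrix.of_apply, H_eq, coeff_monomial_mul'] at h0
    have hle : tl γ ≤ fs δ := by
      by_contra h; exact h0 (if_neg h)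
    have hle' : ∀ i : Fin k, (γ.1 i.succ : ℕ) ≤ (δ.1 i.succ : ℕ) := by
      intro i
      have := hle i.succ
      simpa [tl] using this
    have h1 := comp_sum γ
    have h2 := comp_sum δ
    have hlt : ∑ i : Fin k, (γ.1 i.succ : ℕ) < ∑ i : Fin k, (δ.1 i.succ : ℕ) := by
      refine lt_of_le_of_ne (Finset.sum_le_sum fun i _ => hle' i) fun heq => hne ?_
      apply fs_inj
      ext i
      refine Fin.cases ?_ (fun i => ?_) i
      · simp only [fs_apply]; omega
      · exact (Finset.sum_eq_sum_iff_of_le (fun i _ => hle' i)).1 heq i (Finset.mem_univ i)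
    omega

lemma final [CharZero F] (n k : ℕ) (x : F) :
    ∏ γ : Comp n (k+1), g ((k + 1) * x + (k + 1) + 2 * n - ((γ.1 0 : ℕ) : F)) (γ.1 0 : ℕ) =
      (∏ i ∈ Finset.range n,
          (((k : F) + 1) * x + (n : F) + ((k : F) + 1) + (i : F)) ^ ((k + i).choose k)) /
        ∏ i ∈ Finset.Icc 1 n, (i : F) ^ ((n + k - i).choose k) := by
  classical
  simp only [g_eq]
  rw [Finset.prod_div_distrib]
  congr 1
  · have h : ∀ γ : Comp n (k+1), ∏ j ∈ Finset.range (γ.1 0 : ℕ),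
        ((k + 1) * x + (k + 1) + 2 * n - ((γ.1 0 : ℕ) : F) + (j : F)) =
        ∏ i ∈ Finset.range n, if n - i ≤ (γ.1 0 : ℕ) then
          (((k : F) + 1) * x + (n : F) + ((k : F) + 1) + (i : F)) else 1 := by
      intro γ
      have hl : (γ.1 0 : ℕ) ≤ n := by have := comp_sum γ; omega
      generalize (γ.1 0 : ℕ) = c at hl
      obtain ⟨m, rfl⟩ := Nat.exists_eq_add_of_le' hl
      rw [Finset.prod_range_add, Finset.prod_eq_one (s := Finset.range m), one_mul]
      · refine Finset.prod_congr rfl fun j _ => ?_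
        rw [if_pos (by omega)]; push_cast; ring
      · intro i hi
        have := Finset.mem_range.1 hi
        rw [if_neg (by omega)]
    simp only [h]
    rw [Finset.prod_comm]
    refine Finset.prod_congr rfl fun i hi => ?_
    have := Finset.mem_range.1 hi
    rw [← Finset.prod_filter, Finset.prod_const, card_ge n k (n - i) (by omega)]
    congr 2; omega
  · have h : ∀ γ : Comp n (k+1), ((γ.1 0 : ℕ).factorial : F) =
        ∏ i ∈ Finset.Icc 1 n, if i ≤ (γ.1 0 : ℕ) then (i : F) else 1 := by
      intro γ
      have hl : (γ.1 0 : ℕ) ≤ n := by have := comp_sum γ; omega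
      generalize (γ.1 0 : ℕ) = c at hl
      rw [← Finset.prod_range_add_one_eq_factorial, Finset.range_eq_Ico, Finset.prod_Ico_add' (fun i => i) 0 c 1, ← Finset.prod_filter]
      push_cast
      refine Finset.prod_congr ?_ fun _ _ => rfl
      ext i; simp only [Finset.mem_Icc, Finset.mem_Ico, Finset.mem_filter]; omega
    simp only [h]
    rw [Finset.prod_comm]
    refine Finset.prod_congr rfl fun i hi => ?_
    have := Finset.mem_Icc.1 hi
    rw [← Finset.prod_filter, Finset.prod_const, card_ge n k i (by omega)]
    congr 2; omega

end

end CompDet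

theorem stmt4 {F : Type*} [Field F] [CharZero F] (n k : ℕ) (hn : 0 < n) (hk : 0 < k)
    (x : F) :
    Matrix.det (Matrix.of fun α β : Comp n k =>
        ∏ i, bch (x + ((α.1 i : ℕ) : F) + ((β.1 i : ℕ) : F)) ((β.1 i : ℕ))) =
      (∏ i ∈ Finset.range n,
          ((k : F) * x + (n : F) + (k : F) + (i : F)) ^ ((k + i - 1).choose (k - 1))) /
        ∏ i ∈ Finset.Icc 1 n, (i : F) ^ ((n + k - i - 1).choose (k - 1)) := by
  obtain ⟨k, rfl⟩ : ∃ m, k = m + 1 := ⟨k - 1, by omega⟩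
  rw [CompDet.det_eq, CompDet.det_Tm, CompDet.final]
  congr 1
  · refine Finset.prod_congr rfl fun i _ => ?_
    rw [show k + 1 + i - 1 = k + i by omega]
    push_cast
    rfl
  · refine Finset.prod_congr rfl fun i _ => ?_
    rw [show n + (k + 1) - i - 1 = n + k - i by omega]
    rfl
end

section
/- Main theorem: For vectors of indeterminates x = (x_1,...,x_k) and λ = (λ_1,...,λ_k), and positive integers n, k, the determinant of the matrix indexed by compositions α, β of n into k non-negative parts, with entry ∏_{i=1}^k binom(x_i+λ_i α_i, β_i), equals (∏_{j=1}^k λ_j)^{binom(n+k-1,k)} times the product over all non-negative integer vectors (ε_1,...,ε_k) with ε_1+···+ε_k < n of (n + Σ_{j=1}^k (x_j - ε_j)/λ_j), divided by ∏_{i=1}^n i^{binom(n+k-i-1,k-1)}. -/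
open Finset

/-- Underlying vector of naturals. -/
def cv {n k : ℕ} (a : Comp n k) : Fin k → ℕ := fun i => (a.1 i : ℕ)

theorem cv_sum {n k : ℕ} (a : Comp n k) : ∑ i, cv a i = n := a.2

theorem cv_inj {n k : ℕ} {a b : Comp n k} (h : cv a = cv b) : a = b := by
  apply Subtype.ext
  funext i
  exact Fin.ext (congrFun h i)

theorem cv_le {n k : ℕ} (a : Comp n k) (i : Fin k) : cv a i ≤ n := Nat.lt_succ_iff.mp (a.1 i).2

theorem le_of_sum {n k : ℕ} {w : Fin k → ℕ} (h : ∑ i, w i ≤ n) (i : Fin k) : w i < n + 1 :=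
  Nat.lt_succ_iff.mpr ((Finset.single_le_sum (fun _ _ => Nat.zero_le _) (Finset.mem_univ i)).trans h)

/-- Build a composition. -/
def cmk {n k : ℕ} (w : Fin k → ℕ) (h : ∑ i, w i = n) : Comp n k :=
  ⟨fun i => ⟨w i, le_of_sum h.le i⟩, h⟩

theorem cv_cmk {n k : ℕ} (w : Fin k → ℕ) (h : ∑ i, w i = n) : cv (cmk w h) = w := rfl

theorem sum_upd {k : ℕ} (f : Fin k → ℕ) (p : Fin k) (b : ℕ) :
    ∑ i, Function.update f p b i + f p = ∑ i, f i + b := by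
  rw [Finset.sum_update_of_mem (Finset.mem_univ p),
    Finset.sum_eq_add_sum_sdiff_singleton_of_mem (Finset.mem_univ p) f]
  omega

theorem cv_ext_of {n k : ℕ} {a b : Comp n k} (p : Fin k) (h : ∀ i, i ≠ p → cv a i = cv b i) :
    a = b := by
  apply cv_inj
  have : cv a = Function.update (cv b) p (cv a p) := by
    funext i
    by_cases hi : i = p
    · subst hi; simp
    · simp [hi, h i hi]
  have h2 := sum_upd (cv b) p (cv a p)
  rw [← this, cv_sum, cv_sum] at h2
  have h3 : cv a p = cv b p := by omega
  rw [this, h3]; simp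

/-- If a is below b off p then equal or a_p bigger. -/
theorem cv_lt_of {n k : ℕ} {a b : Comp n k} (p : Fin k) (h : ∀ i, i ≠ p → cv a i ≤ cv b i) :
    a = b ∨ cv b p < cv a p := by
  by_contra hc
  push Not at hc
  obtain ⟨hne, hle⟩ := hc
  apply hne
  apply cv_inj
  funext i
  have hall : ∀ i ∈ Finset.univ, cv a i ≤ cv b i := by
    intro i _
    by_cases hi : i = p
    · subst hi; exact hle
    · exact h i hi
  exact (Finset.sum_eq_sum_iff_of_le hall).mp (by rw [cv_sum, cv_sum]) i (Finset.mem_univ _)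

theorem det_tri {m R : Type*} [Fintype m] [DecidableEq m] [CommRing R] (M : Matrix m m R)
    (b : m → ℤ) (h : ∀ i j, M i j ≠ 0 → i = j ∨ b i < b j) : M.det = ∏ i, M i i := by
  have hM : M.BlockTriangular b := by
    intro i j hij
    by_contra hc
    rcases h i j hc with h1 | h1
    · subst h1; exact lt_irrefl _ hij
    · exact lt_asymm hij h1
  rw [hM.det]
  rw [← Finset.prod_fiberwise_of_maps_to (s := Finset.univ) (t := Finset.univ.image b) (g := b)
    (fun i _ => Finset.mem_image_of_mem _ (Finset.mem_univ i))]
  apply Finset.prod_congr rfl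
  intro a _
  have : M.toSquareBlock b a = Matrix.diagonal (fun i : {i // b i = a} => M i i) := by
    ext i j
    by_cases hij : i = j
    · subst hij; simp [Matrix.toSquareBlock_def]
    · rw [Matrix.diagonal_apply_ne _ hij]
      by_contra hc
      rcases h i.1 j.1 hc with h1 | h1
      · exact hij (Subtype.ext h1)
      · rw [i.2, j.2] at h1; exact lt_irrefl _ h1
  rw [this, Matrix.det_diagonal]
  rw [Finset.prod_subtype (Finset.univ.filter fun i => b i = a) (p := fun i => b i = a) (by simp)
    (fun i => M i i)]

/-- The set of exponents. -/
abbrev ES (n k : ℕ) : Finset (Fin k → Fin (n + 1)) :=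
  Finset.univ.filter (fun f : Fin k → Fin (n + 1) => ∑ i, (f i : ℕ) < n)

theorem prod_ES {M : Type*} [CommMonoid M] {n k : ℕ} (p : Fin k) (g : (Fin k → ℕ) → M) :
    ∏ j ∈ Finset.range n, ∏ b : Comp n k,
      (if j < cv b p then g (Function.update (cv b) p j) else 1) =
    ∏ e ∈ ES n k, g (fun i => (e i : ℕ)) := by
  rw [← Finset.prod_product', ← Finset.prod_filter]
  have key : ∀ (j : ℕ) (b : Comp n k), j < cv b p →
      ∑ i, Function.update (cv b) p j i < n := by
    intro j b h
    have := sum_upd (cv b) p j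
    rw [cv_sum] at this
    omega
  have key2 : ∀ e ∈ ES n k, ∑ i, Function.update (fun i => (e i : ℕ)) p
      ((e p : ℕ) + (n - ∑ i, (e i : ℕ))) i = n := by
    intro e he
    have he' := (Finset.mem_filter.mp he).2
    have := sum_upd (fun i => (e i : ℕ)) p ((e p : ℕ) + (n - ∑ i, (e i : ℕ)))
    omega
  refine Finset.prod_bij' (fun q hq => fun i => ⟨Function.update (cv q.2) p q.1 i,
      le_of_sum (key q.1 q.2 (Finset.mem_filter.mp hq).2).le i⟩)
    (fun e he => ((e p : ℕ), cmk _ (key2 e he))) ?_ ?_ ?_ ?_ ?_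
  · intro q hq
    simp only [Finset.mem_filter, Finset.mem_univ, true_and]
    exact key q.1 q.2 (Finset.mem_filter.mp hq).2
  · intro e he
    have he' := (Finset.mem_filter.mp he).2
    have : (e p : ℕ) ≤ ∑ i, (e i : ℕ) :=
      Finset.single_le_sum (f := fun i => (e i : ℕ)) (fun _ _ => Nat.zero_le _) (Finset.mem_univ p)
    simp only [Finset.mem_filter, Finset.mem_product, Finset.mem_range, Finset.mem_univ, cv_cmk,
      Function.update_self, and_true]
    omega
  · intro q hq
    have hlt := (Finset.mem_filter.mp hq).2
    apply Prod.ext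
    · simp
    · apply cv_ext_of p
      intro i hi
      simp [cv_cmk, hi]
  · intro e he
    funext i
    apply Fin.ext
    by_cases hi : i = p
    · subst hi; simp
    · simp [cv_cmk, hi]
  · intro q hq
    rfl

theorem prod_pow_ES {M : Type*} [CommMonoid M] {n k : ℕ} (p : Fin k) (c : M) :
    ∏ b : Comp n k, c ^ cv b p = c ^ (ES n k).card := by
  have := prod_ES (n := n) p (fun _ => c)
  rw [Finset.prod_const, Finset.prod_comm] at this
  rw [← this]
  apply Finset.prod_congr rfl
  intro b _
  rw [← Finset.prod_filter, Finset.prod_const]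
  congr 1
  have : Finset.filter (fun j => j < cv b p) (Finset.range n) = Finset.range (cv b p) := by
    ext j
    have := cv_le b p
    simp only [Finset.mem_filter, Finset.mem_range]
    omega
  rw [this, Finset.card_range]

theorem card_pA (k m : ℕ) (hk : 0 < k) :
    (Finset.piAntidiag (Finset.univ : Finset (Fin k)) m).card = (m + k - 1).choose (k - 1) := by
  have h := Finset.card_finsuppAntidiag_nat_eq_choose (s := (Finset.univ : Finset (Fin k))) m
  rw [Finset.card_univ, Fintype.card_fin] at h
  have h2 : (m + k - 1).choose (k - 1) = (k + m - 1).choose m := by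
    rw [Nat.choose_symm_of_eq_add (n := m + k - 1) (a := k - 1) (b := m) (by omega)]
    congr 1
    omega
  rw [h2, ← h]
  symm
  refine Finset.card_bij (fun f _ => (f : Fin k → ℕ)) ?_ ?_ ?_
  · intro f hf
    simpa using hf
  · intro f _ g _ h
    exact DFunLike.coe_injective h
  · intro f hf
    exact ⟨Finsupp.equivFunOnFinite.symm f, by simpa using hf, by simp⟩

theorem card_fib {n k : ℕ} (hk : 0 < k) (p : Fin k) (i : ℕ) (hi : i < n) :
    ((ES n k).filter (fun e => (e p : ℕ) = i)).card = (n - 1 - i + k - 1).choose (k - 1) := by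
  rw [← card_pA k _ hk]
  have key : ∀ h ∈ Finset.piAntidiag (Finset.univ : Finset (Fin k)) (n - 1 - i),
      ∑ j, Function.update h p i j < n := by
    intro h hh
    have h1 : ∑ j, h j = n - 1 - i := by simpa using hh
    have := sum_upd h p i
    omega
  refine Finset.card_bij' (fun e _ => Function.update (fun j => (e j : ℕ)) p
      (n - 1 - ∑ j, (e j : ℕ)))
    (fun h hh => fun j => ⟨Function.update h p i j, le_of_sum (key h hh).le j⟩) ?_ ?_ ?_ ?_
  · intro e he
    simp only [Finset.mem_filter, Finset.mem_univ, true_and] at he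
    have := sum_upd (fun j => (e j : ℕ)) p (n - 1 - ∑ j, (e j : ℕ))
    simp only [Finset.mem_piAntidiag, Finset.mem_univ, implies_true, and_true]
    simp only at this
    change ∑ j, _ = _
    omega
  · intro h hh
    simp only [Finset.mem_filter, Finset.mem_univ, true_and, Function.update_self, and_true]
    exact key h hh
  · intro e he
    simp only [Finset.mem_filter, Finset.mem_univ, true_and] at he
    funext j
    apply Fin.ext
    by_cases hj : j = p
    · subst hj; simp [he.2]
    · simp [hj]
  · intro h hh
    have h1 : ∑ j, h j = n - 1 - i := by simpa using hh
    have := sum_upd h p i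
    funext j
    by_cases hj : j = p
    · subst hj
      simp only [Function.update_self]
      omega
    · simp [hj]

theorem ES_lt {n k : ℕ} (p : Fin k) (e) (he : e ∈ ES n k) : (e p : ℕ) ∈ Finset.range n := by
  have he' := (Finset.mem_filter.mp he).2
  have : (e p : ℕ) ≤ ∑ i, (e i : ℕ) :=
    Finset.single_le_sum (f := fun i => (e i : ℕ)) (fun _ _ => Nat.zero_le _) (Finset.mem_univ p)
  exact Finset.mem_range.mpr (by omega)

theorem card_ES {n k : ℕ} (hn : 0 < n) (hk : 0 < k) : (ES n k).card = (n + k - 1).choose k := by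
  let p : Fin k := ⟨0, hk⟩
  rw [Finset.card_eq_sum_card_fiberwise (f := fun e => (e p : ℕ)) (t := Finset.range n)
    (fun e he => ES_lt p e he)]
  rw [Finset.sum_congr rfl (fun i hi => card_fib hk p i (Finset.mem_range.mp hi))]
  rw [Finset.sum_range_reflect (fun i => (i + k - 1).choose (k - 1)) n]
  obtain ⟨k, rfl⟩ : ∃ r, k = r + 1 := ⟨k - 1, by omega⟩
  obtain ⟨n, rfl⟩ : ∃ r, n = r + 1 := ⟨n - 1, by omega⟩
  have := Nat.sum_range_add_choose n k
  simpa [add_assoc, add_comm, add_left_comm] using this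

theorem prod_fib {M : Type*} [CommMonoid M] {n k : ℕ} (hk : 0 < k) (p : Fin k) (w : ℕ → M) :
    ∏ e ∈ ES n k, w ((e p : ℕ) + 1) =
      ∏ i ∈ Finset.Icc 1 n, w i ^ ((n + k - i - 1).choose (k - 1)) := by
  rw [← Finset.prod_fiberwise_of_maps_to' (fun e he => ES_lt p e he) (fun i => w (i + 1))]
  rw [← Finset.Ico_add_one_right_eq_Icc, Finset.prod_Ico_eq_prod_range]
  apply Finset.prod_congr (by simp)
  intro i hi
  have hi' := Finset.mem_range.mp hi
  rw [Finset.prod_const, card_fib hk p i (by omega)]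
  rw [add_comm i 1]
  congr 2
  omega

section mats
variable {F : Type*} [Field F] [CharZero F] {n k : ℕ}

theorem bch_zero (y : F) : bch y 0 = 1 := by simp [bch]

theorem bch_succ (y : F) (m : ℕ) : ((m : F) + 1) * bch y (m + 1) = (y - m) * bch y m := by
  unfold bch
  rw [Finset.prod_range_succ, Nat.factorial_succ]
  have h1 : (m.factorial : F) ≠ 0 := by exact_mod_cast m.factorial_ne_zero
  have h2 : (m : F) + 1 ≠ 0 := by exact_mod_cast Nat.succ_ne_zero m
  push_cast
  field_simp

/-- Product of binomials. -/
noncomputable def FF (y : Fin k → F) (u : Fin k → ℕ) : F := ∏ i, bch (y i) (u i)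

theorem FF_step (y : Fin k → F) (u : Fin k → ℕ) (i : Fin k) :
    (y i - u i) * FF y u = ((u i : F) + 1) * FF y (Function.update u i (u i + 1)) := by
  unfold FF
  rw [← Finset.mul_prod_erase _ _ (Finset.mem_univ i),
    ← Finset.mul_prod_erase _ (fun j => bch (y j) (Function.update u i (u i + 1) j))
      (Finset.mem_univ i)]
  rw [← mul_assoc, ← bch_succ, Function.update_self, mul_assoc]
  congr 2
  apply Finset.prod_congr rfl
  intro j hj
  rw [Function.update_of_ne (Finset.ne_of_mem_erase hj)]

theorem FF_rel (y l : Fin k → F) (u : Fin k → ℕ) (p : Fin k) (hl : ∀ j, l j ≠ 0) :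
    FF y (Function.update u p (u p + 1)) = ∑ i, (if i = p then
      l p / ((u p : F) + 1) * (∑ j, (y j - u j) / l j) * FF y u
      else -(l p / ((u p : F) + 1) * (((u i : F) + 1) / l i)) *
        FF y (Function.update u i (u i + 1))) := by
  have h2 : (u p : F) + 1 ≠ 0 := by exact_mod_cast Nat.succ_ne_zero (u p)
  have h3 : (∑ j, (y j - u j) / l j) * FF y u =
      ∑ i, (((u i : F) + 1) / l i) * FF y (Function.update u i (u i + 1)) := by
    rw [Finset.sum_mul]
    apply Finset.sum_congr rfl
    intro i _
    rw [div_mul_eq_mul_div, FF_step, div_mul_eq_mul_div]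
  rw [← Finset.add_sum_erase _ _ (Finset.mem_univ p)]
  rw [if_pos rfl]
  have h4 : ∀ i ∈ Finset.univ.erase p, (if i = p then
      l p / ((u p : F) + 1) * (∑ j, (y j - u j) / l j) * FF y u
      else -(l p / ((u p : F) + 1) * (((u i : F) + 1) / l i)) *
        FF y (Function.update u i (u i + 1))) = -(l p / ((u p : F) + 1)) * ((((u i : F) + 1) / l i) *
        FF y (Function.update u i (u i + 1))) := by
    intro i hi
    rw [if_neg (Finset.ne_of_mem_erase hi)]
    ring
  rw [Finset.sum_congr rfl h4, ← Finset.mul_sum, mul_assoc, h3,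
    ← Finset.add_sum_erase _ _ (Finset.mem_univ p)]
  have := hl p
  field_simp
  ring

/-- The evaluation points. -/
def YY (x l : Fin k → F) (a : Comp n k) : Fin k → F := fun i => x i + l i * (cv a i : F)

/-- Intermediate matrices. -/
noncomputable def AA (x l : Fin k → F) (p : Fin k) (j : ℕ) : Matrix (Comp n k) (Comp n k) F :=
  Matrix.of fun a b => FF (YY x l a) (Function.update (cv b) p (min (cv b p) j))

/-- The diagonal factor. -/
noncomputable def GG (n : ℕ) (x l : Fin k → F) (p : Fin k) (u : Fin k → ℕ) : F :=
  l p / ((u p : F) + 1) * ((n : F) + ∑ j, (x j - u j) / l j)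

/-- Entries of the transition matrix. -/
noncomputable def co (n : ℕ) (x l : Fin k → F) (p : Fin k) (u : Fin k → ℕ) (i : Fin k) : F :=
  if i = p then GG n x l p u else -(l p / ((u p : F) + 1) * (((u i : F) + 1) / l i))

/-- The transition matrix. -/
noncomputable def TT (x l : Fin k → F) (p : Fin k) (j : ℕ) : Matrix (Comp n k) (Comp n k) F :=
  Matrix.of fun c b => if j < cv b p then
    ∑ i, (if cv c + Pi.single p 1 = cv b + Pi.single i 1 then
      co n x l p (Function.update (cv b) p j) i else 0)
    else if c = b then 1 else 0

theorem sum_pick (p i : Fin k) (b : Comp n k) (hb : 0 < cv b p) (h : (Fin k → ℕ) → F) :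
    ∑ c : Comp n k, (if cv c + Pi.single p 1 = cv b + Pi.single i 1 then h (cv c) else 0) =
      h (cv b + Pi.single i 1 - Pi.single p 1) := by
  have hle : Pi.single p 1 ≤ cv b + Pi.single i 1 := by
    intro t
    by_cases ht : t = p
    · subst ht; simp; omega
    · simp [ht]
  have hs : ∑ t, (cv b + Pi.single i 1 - Pi.single p 1 : Fin k → ℕ) t = n := by
    have e : cv b + Pi.single i 1 - Pi.single p 1 + Pi.single p 1 = cv b + Pi.single i 1 :=
      tsub_add_cancel_of_le hle
    have e2 := congrArg (fun f : Fin k → ℕ => ∑ t, f t) e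
    simp only [Pi.add_apply, Finset.sum_add_distrib, cv_sum, Finset.sum_pi_single',
      Finset.mem_univ, if_true] at e2
    omega
  rw [Finset.sum_eq_single (cmk _ hs)]
  · rw [if_pos, cv_cmk]
    rw [cv_cmk]
    exact tsub_add_cancel_of_le hle
  · intro c _ hc
    rw [if_neg]
    intro he
    apply hc
    apply cv_inj
    rw [cv_cmk, ← he, add_tsub_cancel_right]
  · intro hc; exact absurd (Finset.mem_univ _) hc

theorem AA_step (x l : Fin k → F) (p : Fin k) (j : ℕ) (hl : ∀ j, l j ≠ 0) :
    (AA x l p (j + 1) : Matrix (Comp n k) (Comp n k) F) = AA x l p j * TT x l p j := by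
  ext a b
  rw [Matrix.mul_apply]
  simp only [AA, TT, Matrix.of_apply]
  by_cases hb : j < cv b p
  · simp only [if_pos hb, Finset.mul_sum]
    rw [Finset.sum_comm]
    have hy : ∑ t, (YY x l a t - (Function.update (cv b) p j t : ℕ)) / l t =
        (n : F) + ∑ t, (x t - (Function.update (cv b) p j t : ℕ)) / l t := by
      have : (n : F) = ∑ t, (cv a t : F) := by exact_mod_cast (cv_sum a).symm
      rw [this, ← Finset.sum_add_distrib]
      apply Finset.sum_congr rfl
      intro t _
      have := hl t
      unfold YY
      field_simp
      ring
    have h1 : min (cv b p) (j + 1) = j + 1 := by omega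
    have h := FF_rel (YY x l a) l (Function.update (cv b) p j) p hl
    rw [Function.update_self, Function.update_idem] at h
    rw [h1, h]
    apply Finset.sum_congr rfl
    intro i _
    have := sum_pick (n := n) p i b (by omega) (fun u =>
      FF (YY x l a) (Function.update u p (min (u p) j)) * co n x l p (Function.update (cv b) p j) i)
    simp only [mul_ite, mul_zero]
    rw [this]
    by_cases hi : i = p
    · subst hi
      simp only [co, if_true, add_tsub_cancel_right, GG, Function.update_self]
      rw [hy, min_eq_right hb.le]
      ring
    · simp only [co, if_neg hi, Function.update_self]
      have hv : Function.update (cv b + Pi.single i 1 - Pi.single p 1) p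
          (min ((cv b + Pi.single i 1 - Pi.single p 1 : Fin k → ℕ) p) j) =
          Function.update (Function.update (cv b) p j) i (Function.update (cv b) p j i + 1) := by
        funext t
        by_cases ht : t = p
        · subst ht
          have : t ≠ i := fun h => hi h.symm
          simp [this]
          omega
        · by_cases hti : t = i
          · subst hti
            simp [ht]
          · simp [ht, hti]
      rw [hv]
      ring
  · simp only [if_neg hb, mul_ite, mul_one, mul_zero, Finset.sum_ite_eq', Finset.mem_univ, if_true]
    rw [min_eq_left (by omega), min_eq_left (by omega)]

theorem TT_det (x l : Fin k → F) (p : Fin k) (j : ℕ) :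
    (TT x l p j : Matrix (Comp n k) (Comp n k) F).det =
      ∏ b : Comp n k, (if j < cv b p then GG n x l p (Function.update (cv b) p j) else 1) := by
  rw [det_tri _ (fun b => (cv b p : ℤ))]
  · apply Finset.prod_congr rfl
    intro b _
    simp only [TT, Matrix.of_apply, if_true]
    split_ifs with h
    · rw [Finset.sum_eq_single p]
      · simp [co]
      · intro i _ hi
        rw [if_neg]
        intro he
        have := congrFun he i
        simp [hi] at this
      · intro hc; exact absurd (Finset.mem_univ _) hc
    · rfl
  · intro c b h
    by_contra hc
    push Not at hc
    obtain ⟨h1, h2⟩ := hc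
    apply h
    simp only [TT, Matrix.of_apply, if_neg h1]
    split_ifs with hj
    · apply Finset.sum_eq_zero
      intro i _
      rw [if_neg]
      intro he
      by_cases hi : i = p
      · subst hi
        exact h1 (cv_inj (add_right_cancel he))
      · have hpi : p ≠ i := fun h => hi h.symm
        have := congrFun he p
        simp [hpi] at this
        omega
    · rfl

theorem AA_det (x l : Fin k → F) (p : Fin k) (hl : ∀ j, l j ≠ 0) (m : ℕ) :
    (AA x l p m : Matrix (Comp n k) (Comp n k) F).det =
      (AA x l p 0 : Matrix (Comp n k) (Comp n k) F).det * ∏ j ∈ Finset.range m,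
      ∏ b : Comp n k, (if j < cv b p then GG n x l p (Function.update (cv b) p j) else 1) := by
  induction m with
  | zero => simp
  | succ m ih => rw [AA_step x l p m hl, Matrix.det_mul, ih, TT_det, Finset.prod_range_succ, mul_assoc]

/-- Coefficients of the binomial expansion. -/
noncomputable def MM (x l : F) : ℕ → ℕ → F
  | 0, 0 => 1
  | 0, _ + 1 => 0
  | b + 1, 0 => MM x l b 0 * (x - b) / (b + 1)
  | b + 1, c + 1 => (MM x l b (c + 1) * (x + l * (c + 1) - b) + l * (c + 1) * MM x l b c) / (b + 1)

theorem MM_zero (x l : F) (b c : ℕ) (h : b < c) : MM x l b c = 0 := by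
  induction b generalizing c with
  | zero =>
    cases c with
    | zero => omega
    | succ c => rfl
  | succ b ih =>
    cases c with
    | zero => omega
    | succ c => simp [MM, ih (c + 1) (by omega), ih c (by omega)]

theorem MM_diag (x l : F) (b : ℕ) : MM x l b b = l ^ b := by
  induction b with
  | zero => simp [MM]
  | succ b ih =>
    have h2 : (b : F) + 1 ≠ 0 := by exact_mod_cast Nat.succ_ne_zero b
    simp only [MM, MM_zero x l b (b + 1) (by omega), ih]
    field_simp
    ring

theorem MM_expand (x l : F) (a b N : ℕ) (hN : b < N) :
    bch (x + l * a) b = ∑ c ∈ Finset.range N, (a.choose c : F) * MM x l b c := by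
  induction b generalizing N with
  | zero =>
    obtain ⟨N, rfl⟩ : ∃ r, N = r + 1 := ⟨N - 1, by omega⟩
    rw [Finset.sum_range_succ']
    simp [MM, bch_zero]
  | succ b ih =>
    obtain ⟨N, rfl⟩ : ∃ r, N = r + 1 := ⟨N - 1, by omega⟩
    have h2 : (b : F) + 1 ≠ 0 := by exact_mod_cast Nat.succ_ne_zero b
    apply mul_left_cancel₀ h2
    have hch : ∀ c : ℕ, (a : F) * (a.choose c : F) =
        (c + 1) * (a.choose (c + 1) : F) + c * (a.choose c : F) := by
      intro c
      have := Nat.choose_succ_right_eq a c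
      by_cases hc : c ≤ a
      · have h3 := congrArg (Nat.cast : ℕ → F) this
        rw [Nat.cast_mul, Nat.cast_mul, Nat.cast_sub hc] at h3
        push_cast at h3
        linear_combination -h3
      · rw [Nat.choose_eq_zero_of_lt (by omega : a < c), Nat.choose_eq_zero_of_lt (by omega)]
        simp
    rw [bch_succ, Finset.sum_range_succ']
    have e1 : (x + l * a - b) * bch (x + l * a) b =
        ∑ c ∈ Finset.range (N + 1), (a.choose c : F) * MM x l b c * (x + l * c - b) +
        ∑ c ∈ Finset.range N, (a.choose (c + 1) : F) * (l * (c + 1) * MM x l b c) := by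
      have e2 : ∑ c ∈ Finset.range N, (a.choose (c + 1) : F) * (l * (c + 1) * MM x l b c) = 
        ∑ c ∈ Finset.range N, l * (a - c) * ((a.choose c : F) * MM x l b c) := by
        apply Finset.sum_congr rfl
        intro c _
        linear_combination (-l * MM x l b c) * hch c
      rw [e2, Finset.sum_range_succ, MM_zero x l b N (by omega), mul_zero, zero_mul, add_zero,
        ← Finset.sum_add_distrib, ih N (by omega), Finset.mul_sum]
      apply Finset.sum_congr rfl
      intro c _
      ring
    rw [e1, Finset.sum_range_succ', mul_add, Finset.mul_sum, add_right_comm,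
      ← Finset.sum_add_distrib]
    congr 1
    · apply Finset.sum_congr rfl
      intro c _
      simp only [MM]
      push_cast
      field_simp
    · simp only [MM]
      push_cast
      field_simp
      ring

/-- First factor of the final matrix. -/
noncomputable def CC (F : Type*) [Field F] {n k : ℕ} (p : Fin k) :
    Matrix (Comp n k) (Comp n k) F :=
  Matrix.of fun a c => ∏ i ∈ Finset.univ.erase p, ((cv a i).choose (cv c i) : F)

/-- Second factor of the final matrix. -/
noncomputable def DD (x l : Fin k → F) (p : Fin k) : Matrix (Comp n k) (Comp n k) F :=
  Matrix.of fun c b => ∏ i ∈ Finset.univ.erase p, MM (x i) (l i) (cv b i) (cv c i)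

theorem CC_det (p : Fin k) : (CC F p : Matrix (Comp n k) (Comp n k) F).det = 1 := by
  rw [det_tri _ (fun b => (cv b p : ℤ))]
  · simp [CC]
  · intro a c h
    simp only [CC, Matrix.of_apply, Finset.prod_ne_zero_iff] at h
    have := cv_lt_of (a := c) (b := a) p (fun i hi => by
      have h1 := h i (Finset.mem_erase.mpr ⟨hi, Finset.mem_univ _⟩)
      by_contra hc
      exact h1 (by rw [Nat.choose_eq_zero_of_lt (by omega)]; simp))
    rcases this with h1 | h1
    · exact Or.inl h1.symm
    · right; exact_mod_cast h1

theorem DD_det (x l : Fin k → F) (p : Fin k) :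
    (DD x l p : Matrix (Comp n k) (Comp n k) F).det =
      ∏ i ∈ Finset.univ.erase p, l i ^ (ES n k).card := by
  rw [det_tri _ (fun b => -(cv b p : ℤ))]
  · simp only [DD, Matrix.of_apply, MM_diag]
    rw [Finset.prod_comm]
    simp only [prod_pow_ES]
  · intro c b h
    simp only [DD, Matrix.of_apply, Finset.prod_ne_zero_iff] at h
    have := cv_lt_of (a := c) (b := b) p (fun i hi => by
      have h1 := h i (Finset.mem_erase.mpr ⟨hi, Finset.mem_univ _⟩)
      by_contra hc
      exact h1 (MM_zero _ _ _ _ (by omega)))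
    rcases this with h1 | h1
    · exact Or.inl h1
    · right; omega

theorem AA_zero (x l : Fin k → F) (p : Fin k) :
    (AA x l p 0 : Matrix (Comp n k) (Comp n k) F) = CC F p * DD x l p := by
  ext a b
  rw [Matrix.mul_apply]
  simp only [AA, CC, DD, Matrix.of_apply, FF, Nat.min_zero, ← Finset.prod_mul_distrib]
  let h : Fin k → ℕ → F := fun i c =>
    if i = p then (if c = 0 then 1 else 0)
    else ((cv a i).choose c : F) * MM (x i) (l i) (cv b i) c
  have e1 : ∀ i, bch (YY x l a i) (Function.update (cv b) p 0 i) =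
      ∑ c : Fin (n + 1), h i (c : ℕ) := by
    intro i
    rw [Fin.sum_univ_eq_sum_range (h i) (n + 1)]
    by_cases hi : i = p
    · subst hi
      simp [h, bch_zero]
    · simp only [h, if_neg hi, Function.update_of_ne hi]
      exact MM_expand _ _ _ _ _ (Nat.lt_succ_iff.mpr (cv_le b i))
  simp only [e1]
  rw [Finset.prod_univ_sum, Fintype.piFinset_univ]
  symm
  refine Finset.sum_of_injOn (fun c : Comp n k => Function.update c.1 p 0) ?_ ?_ ?_ ?_
  · intro c _ d _ hcd
    apply cv_ext_of p
    intro i hi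
    have := congrFun hcd i
    simp only [Function.update_of_ne hi] at this
    simp [cv, this]
  · intro c _; simp
  · intro g _ hg
    by_contra hc
    rw [← ne_eq, Finset.prod_ne_zero_iff] at hc
    apply hg
    have hgp : (g p : ℕ) = 0 := by
      have := hc p (Finset.mem_univ _)
      by_contra h0
      simp [h, h0] at this
    have hgi : ∀ i, (g i : ℕ) ≤ cv b i := by
      intro i
      by_cases hi : i = p
      · subst hi; omega
      · have := hc i (Finset.mem_univ _)
        simp only [h, if_neg hi] at this
        by_contra h0
        exact this (by rw [MM_zero _ _ _ _ (by omega), mul_zero])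
    have hsum : ∑ i, (g i : ℕ) ≤ n := by
      exact (Finset.sum_le_sum (fun i _ => hgi i)).trans (cv_sum b).le
    have hs2 : ∑ i, Function.update (fun i => (g i : ℕ)) p (n - ∑ i, (g i : ℕ)) i = n := by
      have := sum_upd (fun i => (g i : ℕ)) p (n - ∑ i, (g i : ℕ))
      omega
    refine ⟨cmk _ hs2, by simp, ?_⟩
    funext i
    apply Fin.ext
    by_cases hi : i = p
    · subst hi; simp [hgp]
    · simp [cmk, hi]
  · intro c _
    rw [← Finset.mul_prod_erase _ _ (Finset.mem_univ p)]
    simp only [h, if_true, Function.update_self, Fin.val_zero, one_mul]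
    apply Finset.prod_congr rfl
    intro i hi
    have hi' := Finset.ne_of_mem_erase hi
    simp [hi', cv]

end mats

theorem stmt6 {F : Type*} [Field F] [CharZero F] (n k : ℕ) (hn : 0 < n) (hk : 0 < k)
    (x l : Fin k → F) (hl : ∀ j, l j ≠ 0) :
    Matrix.det (Matrix.of fun α β : Comp n k =>
        ∏ i, bch (x i + l i * ((α.1 i : ℕ) : F)) ((β.1 i : ℕ))) =
      (∏ j, l j) ^ ((n + k - 1).choose k) *
        (∏ ε ∈ Finset.univ.filter (fun f : Fin k → Fin (n + 1) => ∑ i, (f i : ℕ) < n),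
          ((n : F) + ∑ j, (x j - ((ε j : ℕ) : F)) / l j)) /
        ∏ i ∈ Finset.Icc 1 n, (i : F) ^ ((n + k - i - 1).choose (k - 1)) := by
  let p : Fin k := ⟨0, hk⟩
  have hA : (Matrix.of fun α β : Comp n k =>
        ∏ i, bch (x i + l i * ((α.1 i : ℕ) : F)) ((β.1 i : ℕ))) = AA x l p n := by
    ext a b
    simp only [AA, Matrix.of_apply, min_eq_left (cv_le b p), Function.update_eq_self]
    rfl
  rw [hA, AA_det x l p hl n, prod_ES p, AA_zero, Matrix.det_mul, CC_det, DD_det, one_mul]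
  simp only [GG]
  rw [Finset.prod_mul_distrib, Finset.prod_div_distrib, Finset.prod_const]
  have h1 := prod_fib (n := n) hk p (fun i => (i : F))
  push_cast at h1
  rw [h1, ← card_ES hn hk, ← Finset.prod_pow, ← Finset.mul_prod_erase _ _ (Finset.mem_univ p)]
  ring
end

section
/- For a vector of indeterminates x = (x_1,...,x_k), an indeterminate λ, and positive integers n, k, the determinant of the matrix indexed by compositions α, β of n into k non-negative parts, with entry ∏_{i=1}^k binom(x_i+λα_i, β_i), equals λ^{(k-1)·binom(n+k-1,k)} · ∏_{i=1}^n ((|x|+(λ-1)n+i)/i)^{binom(n+k-i-1,k-1)}, with |x| = x_1+···+x_k. -/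
open Finset

namespace Stmt8Aux

lemma bch_zero {F : Type*} [Field F] (y : F) : bch y 0 = 1 := by simp [bch]

lemma bch_succ {F : Type*} [Field F] [CharZero F] (y : F) (m : ℕ) :
    bch y (m + 1) * ((m : F) + 1) = (y - m) * bch y m := by
  have h1 : ((m.factorial : ℕ) : F) ≠ 0 := by exact_mod_cast m.factorial_ne_zero
  have h2 : (m : F) + 1 ≠ 0 := by exact_mod_cast m.succ_ne_zero
  simp only [bch, Finset.prod_range_succ, Nat.factorial_succ]
  push_cast
  field_simp

lemma bch_nat {F : Type*} [Field F] [CharZero F] (a m : ℕ) :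
    bch (a : F) m = (a.choose m : F) := by
  induction m with
  | zero => simp [bch]
  | succ m ih =>
    have h2 : (m : F) + 1 ≠ 0 := by exact_mod_cast m.succ_ne_zero
    apply mul_right_cancel₀ h2
    rw [bch_succ, ih]
    rcases le_or_gt m a with h | h
    · have := Nat.choose_succ_right_eq a m
      have h3 := congrArg (Nat.cast : ℕ → F) this
      push_cast [Nat.cast_sub h] at h3
      rw [h3]; ring
    · rw [Nat.choose_eq_zero_of_lt h, Nat.choose_eq_zero_of_lt (by omega)]; simp

lemma bch_eq_prod {F : Type*} [Field F] [CharZero F] (u : F) (b : ℕ) :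
    bch (u + b) b = ∏ i ∈ Finset.Icc 1 b, ((u + i) / (i : F)) := by
  induction b with
  | zero => simp [bch]
  | succ b ih =>
    rw [Finset.prod_Icc_succ_top (by omega), ← ih]
    have h1 : ((b.factorial : ℕ) : F) ≠ 0 := by exact_mod_cast b.factorial_ne_zero
    have h2 : (b : F) + 1 ≠ 0 := by exact_mod_cast b.succ_ne_zero
    simp only [bch]
    rw [Finset.prod_range_succ', Nat.factorial_succ]
    have : ∏ j ∈ Finset.range b, (u + ((b + 1 : ℕ) : F) - ((j + 1 : ℕ) : F)) =
        ∏ j ∈ Finset.range b, (u + (b : F) - (j : F)) :=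
      Finset.prod_congr rfl fun j _ => by push_cast; ring
    rw [this]
    push_cast
    field_simp
    ring

lemma det_diag_tri {F I : Type*} [Field F] [Fintype I] [DecidableEq I] (r : I → ℤ)
    (M : Matrix I I F) (h : ∀ i j, i ≠ j → r i ≤ r j → M i j = 0) :
    M.det = ∏ i, M i i := by
  let g : I → ℤ ×ₗ Fin (Fintype.card I) := fun i => toLex (r i, Fintype.equivFin I i)
  have hg : Function.Injective g := by
    intro i j hij
    have := congrArg (fun z => (ofLex z).2) hij
    simpa [g] using this
  let _ : LinearOrder I := LinearOrder.lift' g hg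
  have key : M.det = ∏ i, M i i := by
    convert Matrix.det_of_isLowerTriangular M ?_
    intro i j hij
    have hij' : g i < g j := hij
    rw [Prod.Lex.lt_iff] at hij'
    apply h
    · rintro rfl; simp at hij'
    · rcases hij' with h | h
      · exact h.le
      · exact h.1.le
  exact key

lemma det_tri {F I X : Type*} [Field F] [Fintype I] [DecidableEq I] (r : I → ℤ)
    (p q : I → X → F) (c : I → F)
    (h : ∀ β, p β - c β • q β ∈ Submodule.span F (q '' {γ | r β < r γ})) (pt : I → X) :
    Matrix.det (Matrix.of fun α β => p β (pt α)) =
      (∏ β, c β) * Matrix.det (Matrix.of fun α β => q β (pt α)) := by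
  have h' : ∀ β, ∃ C : I →₀ F, (∀ γ, ¬ r β < r γ → C γ = 0) ∧
      p β - c β • q β = ∑ γ, C γ • q γ := by
    intro β
    obtain ⟨C, hC, hC2⟩ := (Finsupp.mem_span_image_iff_linearCombination F).1 (h β)
    refine ⟨C, ?_, ?_⟩
    · intro γ hγ
      by_contra hne
      exact hγ (hC (Finsupp.mem_support_iff.2 hne))
    · rw [← hC2, Finsupp.linearCombination_apply, Finsupp.sum_fintype _ _ (by simp)]
  choose C hC1 hC2 using h'
  have hM : (Matrix.of fun α β => p β (pt α)) = (Matrix.of fun α β => q β (pt α)) *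
      (Matrix.of fun γ β => C β γ + if γ = β then c β else 0) := by
    ext α β
    have := congrFun (hC2 β) (pt α)
    simp only [Pi.sub_apply, Pi.smul_apply, Finset.sum_apply, smul_eq_mul] at this
    simp only [Matrix.mul_apply, Matrix.of_apply, mul_add, Finset.sum_add_distrib]
    simp only [mul_ite, mul_zero, Finset.sum_ite_eq', Finset.mem_univ, if_true]
    rw [sub_eq_iff_eq_add] at this
    rw [this, mul_comm (c β)]
    congr 1
    exact Finset.sum_congr rfl fun _ _ => mul_comm _ _
  rw [hM, Matrix.det_mul, mul_comm]
  congr 1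
  rw [det_diag_tri r]
  · apply Finset.prod_congr rfl
    intro β _
    simp [hC1 β β (lt_irrefl _)]
  · intro i j hij hr
    simp [hij, hC1 j i (not_lt.2 hr)]

noncomputable def E {F : Type*} [Field F] {d : ℕ} (γ : Fin d → ℕ) : (Fin d → F) → F :=
  fun y => ∏ i, bch (y i) (γ i)

lemma prod_step {F : Type*} [Field F] [CharZero F] {d : ℕ} (γ : Fin d → ℕ) (i : Fin d)
    (y : Fin d → F) :
    E (γ + Pi.single i 1) y * ((γ i : F) + 1) = (y i - γ i) * E γ y := by
  unfold E
  rw [← Finset.mul_prod_erase _ _ (Finset.mem_univ i),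
    ← Finset.mul_prod_erase _ (fun j => bch (y j) (γ j)) (Finset.mem_univ i)]
  have : ∏ j ∈ Finset.univ.erase i, bch (y j) ((γ + Pi.single i 1 : Fin d → ℕ) j) =
      ∏ j ∈ Finset.univ.erase i, bch (y j) (γ j) := by
    apply Finset.prod_congr rfl
    intro j hj
    simp [Finset.ne_of_mem_erase hj]
  rw [this]
  simp only [Pi.add_apply, Pi.single_eq_same]
  rw [← mul_assoc, ← bch_succ]; ring

lemma sum_single {d : ℕ} (γ : Fin d → ℕ) (i : Fin d) :
    ∑ j, (γ + Pi.single i 1 : Fin d → ℕ) j = ∑ j, γ j + 1 := by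
  simp [Finset.sum_add_distrib]

lemma yE {F : Type*} [Field F] [CharZero F] {d : ℕ} (γ : Fin d → ℕ) (i : Fin d) :
    (fun y : Fin d → F => y i * E γ y) =
      ((γ i : F) + 1) • E (γ + Pi.single i 1) + (γ i : F) • E γ := by
  funext y
  simp only [Pi.add_apply, Pi.smul_apply, smul_eq_mul]
  linear_combination - prod_step γ i y

lemma mul_mem {F : Type*} [Field F] [CharZero F] {d : ℕ} (P Q : Set (Fin d → ℕ)) (i : Fin d)
    (h1 : P ⊆ Q) (h2 : ∀ γ ∈ P, γ + Pi.single i 1 ∈ Q) (f : (Fin d → F) → F)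
    (hf : f ∈ Submodule.span F (E '' P)) :
    (fun y => y i * f y) ∈ Submodule.span F (E (F := F) '' Q) := by
  induction hf using Submodule.span_induction with
  | mem f hf =>
    obtain ⟨γ, hγ, rfl⟩ := hf
    rw [yE]
    exact Submodule.add_mem _
      (Submodule.smul_mem _ _ (Submodule.subset_span ⟨_, h2 _ hγ, rfl⟩))
      (Submodule.smul_mem _ _ (Submodule.subset_span ⟨_, h1 hγ, rfl⟩))
  | zero =>
    convert Submodule.zero_mem (Submodule.span F (E (F := F) '' Q)) using 1
    funext y; simp
  | add f g _ _ hf hg =>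
    convert Submodule.add_mem _ hf hg using 1
    funext y; simp [mul_add]
  | smul a f _ hf =>
    convert Submodule.smul_mem _ a hf using 1
    funext y; simp; ring

lemma span1 {F : Type*} [Field F] [CharZero F] {d : ℕ} (s : F) (γ : Fin d → ℕ) (m : ℕ) :
    (fun y => E γ y * bch (s - ∑ i, y i) m) - bch (s - ((∑ i, γ i : ℕ) : F)) m • E γ ∈
      Submodule.span F (E (F := F) '' {δ | ∑ i, γ i < ∑ i, δ i ∧ ∑ i, δ i ≤ ∑ i, γ i + m}) := by
  induction m with
  | zero =>
    convert Submodule.zero_mem _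
    funext y
    simp [bch_zero]
  | succ m ih =>
    set f := (fun y => E γ y * bch (s - ∑ i, y i) m) - bch (s - ((∑ i, γ i : ℕ) : F)) m • E γ
      with hf
    set Q := {δ : Fin d → ℕ | ∑ i, γ i < ∑ i, δ i ∧ ∑ i, δ i ≤ ∑ i, γ i + (m + 1)} with hQ
    have hm : (m : F) + 1 ≠ 0 := by exact_mod_cast m.succ_ne_zero
    have e1 : ∀ i, (fun y => y i * f y) ∈ Submodule.span F (E (F := F) '' Q) := by
      intro i
      refine mul_mem _ Q i ?_ ?_ f ih
      · rintro δ ⟨h1, h2⟩; exact ⟨h1, by omega⟩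
      · rintro δ ⟨h1, h2⟩
        simp only [hQ, Set.mem_ofPred_eq, sum_single]
        omega
    have e2 : f ∈ Submodule.span F (E (F := F) '' Q) := by
      refine Submodule.span_mono (Set.image_mono ?_) ih
      rintro δ ⟨h1, h2⟩; exact ⟨h1, by omega⟩
    have e3 : ∀ i, E (F := F) (γ + Pi.single i 1) ∈ Submodule.span F (E (F := F) '' Q) := by
      intro i
      refine Submodule.subset_span ⟨_, ?_, rfl⟩
      simp only [hQ, Set.mem_ofPred_eq, sum_single]
      omega
    have tot := Submodule.smul_mem _ ((m : F) + 1)⁻¹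
      (Submodule.sub_mem _ (Submodule.sub_mem _ (Submodule.smul_mem _ (s - m) e2)
        (Submodule.sum_mem (t := Finset.univ) _ fun i _ => e1 i))
        (Submodule.smul_mem _ (bch (s - ((∑ i, γ i : ℕ) : F)) m)
          (Submodule.sum_mem (t := Finset.univ) _ fun i _ =>
            Submodule.smul_mem _ ((γ i : F) + 1) (e3 i))))
    convert tot using 1
    funext y
    simp only [Pi.sub_apply, Pi.smul_apply, Finset.sum_apply, smul_eq_mul]
    rw [← Finset.sum_mul, eq_inv_mul_iff_mul_eq₀ hm]
    have e4 : ∑ i, ((γ i : F) + 1) * E (γ + Pi.single i 1) y =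
        (∑ i, y i - ((∑ i, γ i : ℕ) : F)) * E γ y := by
      push_cast
      rw [← Finset.sum_sub_distrib, Finset.sum_mul]
      refine Finset.sum_congr rfl fun i _ => ?_
      rw [← prod_step]; ring
    rw [e4]
    have b1 := bch_succ (s - ∑ i, y i) m
    have b2 := bch_succ (s - ((∑ i, γ i : ℕ) : F)) m
    simp only [hf, Pi.sub_apply, Pi.smul_apply, smul_eq_mul]
    linear_combination E γ y * b1 - E γ y * b2

lemma span2 {F : Type*} [Field F] [CharZero F] {d : ℕ} (x : Fin d → F) (l : F) (N : ℕ) :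
    ∀ γ : Fin d → ℕ, ∑ i, γ i = N →
    (fun a : Fin d → F => E γ (fun i => x i + l * a i)) - l ^ N • E γ ∈
      Submodule.span F (E (F := F) '' {δ | ∑ i, δ i < N}) := by
  induction N with
  | zero =>
    intro γ hγ
    have : γ = 0 := by
      funext i
      simpa using (Finset.sum_eq_zero_iff.1 hγ) i (Finset.mem_univ i)
    subst this
    convert Submodule.zero_mem _
    funext y
    simp [E, bch_zero]
  | succ N ih =>
    intro γ' hγ'
    obtain ⟨i, hi⟩ : ∃ i, γ' i ≠ 0 := by
      by_contra hcon
      push Not at hcon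
      simp [hcon] at hγ'
    obtain ⟨γ, rfl⟩ : ∃ γ : Fin d → ℕ, γ' = γ + Pi.single i 1 := by
      refine ⟨γ' - Pi.single i 1, ?_⟩
      funext j
      by_cases hj : j = i
      · subst hj; simp; omega
      · simp [hj]
    rw [sum_single] at hγ'
    have hγ : ∑ i, γ i = N := by omega
    have ih := ih γ hγ
    have hm : (γ i : F) + 1 ≠ 0 := by exact_mod_cast (γ i).succ_ne_zero
    set f := (fun a : Fin d → F => E γ (fun i => x i + l * a i)) - l ^ N • E γ with hf
    set Q := {δ : Fin d → ℕ | ∑ i, δ i < N + 1} with hQ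
    have e1 : (fun y => y i * f y) ∈ Submodule.span F (E (F := F) '' Q) := by
      refine mul_mem _ Q i ?_ ?_ f ih
      · intro δ h1
        simp only [hQ, Set.mem_ofPred_eq] at h1 ⊢
        omega
      · intro δ h1
        simp only [hQ, Set.mem_ofPred_eq, sum_single] at h1 ⊢
        omega
    have e2 : f ∈ Submodule.span F (E (F := F) '' Q) := by
      refine Submodule.span_mono (Set.image_mono ?_) ih
      intro δ h1
      simp only [hQ, Set.mem_ofPred_eq] at h1 ⊢
      omega
    have e3 : E (F := F) γ ∈ Submodule.span F (E (F := F) '' Q) := by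
      refine Submodule.subset_span ⟨_, ?_, rfl⟩
      simp only [hQ, Set.mem_ofPred_eq]
      omega
    have tot := Submodule.smul_mem _ ((γ i : F) + 1)⁻¹
      (Submodule.add_mem _ (Submodule.add_mem _ (Submodule.smul_mem _ (x i - γ i) e2)
        (Submodule.smul_mem _ l e1))
        (Submodule.smul_mem _ (l ^ N * (x i - γ i + l * γ i)) e3))
    convert tot using 1
    funext y
    simp only [Pi.sub_apply, Pi.add_apply, Pi.smul_apply, smul_eq_mul]
    rw [eq_inv_mul_iff_mul_eq₀ hm]
    have b1 := prod_step γ i (fun i => x i + l * y i)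
    have b2 := prod_step γ i y
    simp only [hf, Pi.sub_apply, Pi.smul_apply, smul_eq_mul]
    linear_combination b1 - l ^ (N + 1) * b2

/-- all but the last coordinate -/
def t {n d : ℕ} (β : Comp n (d + 1)) : Fin d → ℕ := fun i => (β.1 i.castSucc : ℕ)

lemma t_sum {n d : ℕ} (β : Comp n (d + 1)) :
    ∑ i, t β i + (β.1 (Fin.last d) : ℕ) = n := by
  have := β.2
  rw [Fin.sum_univ_castSucc] at this
  exact this

lemma t_inj {n d : ℕ} : Function.Injective (t (n := n) (d := d)) := by
  intro α β h
  have hl : (α.1 (Fin.last d) : ℕ) = β.1 (Fin.last d) := by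
    have h1 := t_sum α
    have h2 := t_sum β
    rw [h] at h1; omega
  apply Subtype.ext
  funext i
  apply Fin.ext
  refine Fin.lastCases hl (fun j => ?_) i
  exact congrFun h j

lemma t_surj {n d : ℕ} (γ : Fin d → ℕ) (h : ∑ i, γ i ≤ n) : ∃ β : Comp n (d + 1), t β = γ := by
  have hle : ∀ i, γ i ≤ n := fun i =>
    (Finset.single_le_sum (f := γ) (fun _ _ => Nat.zero_le _) (Finset.mem_univ i)).trans h
  refine ⟨⟨Fin.snoc (α := fun _ => Fin (n + 1)) (fun i => ⟨γ i, by have := hle i; omega⟩)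
    ⟨n - ∑ i, γ i, by omega⟩, ?_⟩, ?_⟩
  · rw [Fin.sum_univ_castSucc]
    simp; omega
  · funext i
    simp [t]

lemma card_comp (n d : ℕ) : Fintype.card (Comp n (d + 1)) = (n + d).choose d := by
  have : Fintype.card (Comp n (d + 1)) =
      (Finset.finsuppAntidiag (Finset.univ : Finset (Fin (d + 1))) n).card := by
    rw [← Finset.card_univ]
    refine Finset.card_bij
      (fun β _ => Finsupp.equivFunOnFinite.symm (fun i => (β.1 i : ℕ))) ?_ ?_ ?_
    · intro β _; simp [β.2]
    · intro α _ β _ h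
      apply Subtype.ext; funext i
      exact Fin.ext (congrFun (Finsupp.equivFunOnFinite.symm.injective h) i)
    · intro γ hγ
      have hγ : ∑ i, γ i = n := by simpa using hγ
      have hle : ∀ i, γ i ≤ n := fun i => hγ ▸
        (Finset.single_le_sum (f := γ) (fun _ _ => Nat.zero_le _) (Finset.mem_univ i))
      refine ⟨⟨fun i => ⟨γ i, by have := hle i; omega⟩, hγ⟩, Finset.mem_univ _, ?_⟩
      ext i; simp
  rw [this, Finset.card_finsuppAntidiag_nat_eq_choose]
  have h : (Finset.univ : Finset (Fin (d + 1))).card + n - 1 = n + d := by simp; omega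
  rw [h, Nat.choose_symm_add]

lemma hockey (n d : ℕ) :
    ∑ j ∈ Finset.Icc 1 n, (n - j + d).choose d = (n + d).choose (d + 1) := by
  have : ∑ j ∈ Finset.Icc 1 n, (n - j + d).choose d =
      ∑ i ∈ Finset.range n, (i + d).choose d := by
    refine Finset.sum_nbij' (fun j => n - j) (fun i => n - i) ?_ ?_ ?_ ?_ ?_
    · intro j hj; simp at hj ⊢; omega
    · intro j hj; simp at hj ⊢; omega
    · intro j hj; simp at hj ⊢; omega
    · intro j hj; simp at hj ⊢; omega
    · intro j hj; rfl
  rw [this]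
  cases n with
  | zero => simp
  | succ m =>
    rw [Nat.sum_range_add_choose]
    congr 1
    omega

lemma card_ge (n d j : ℕ) (hj : j ≤ n) (i : Fin (d + 1)) :
    (Finset.univ.filter fun β : Comp n (d + 1) => j ≤ (β.1 i : ℕ)).card =
      (n - j + d).choose d := by
  rw [← card_comp, ← Finset.card_univ]
  symm
  have hle : ∀ β : Comp (n - j) (d + 1), ∀ q, (β.1 q : ℕ) + (Pi.single i j : Fin (d+1) → ℕ) q < n + 1 := by
    intro β q
    have h1 := (β.1 q).2
    have h2 : (Pi.single i j : Fin (d+1) → ℕ) q ≤ j := by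
      by_cases hq : q = i
      · subst hq; simp
      · simp [hq]
    omega
  refine Finset.card_bij (fun β _ => ⟨fun q => ⟨_, hle β q⟩, ?_⟩) ?_ ?_ ?_
  · simp only [Finset.sum_add_distrib, β.2]
    simp; omega
  · intro β _; simp
  · intro α _ β _ h
    apply Subtype.ext; funext q; apply Fin.ext
    have := congrArg Fin.val (congrFun (congrArg Subtype.val h) q)
    simpa using this
  · intro γ hγ
    have hγ : j ≤ (γ.1 i : ℕ) := by simpa using hγ
    have hs : ∀ q, (Pi.single i j : Fin (d+1) → ℕ) q ≤ (γ.1 q : ℕ) := by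
      intro q
      by_cases hq : q = i
      · subst hq; simpa using hγ
      · simp [hq]
    have hsum : ∑ q, ((γ.1 q : ℕ) - (Pi.single i j : Fin (d+1) → ℕ) q) = n - j := by
      rw [Finset.sum_tsub_distrib _ (fun q _ => hs q), γ.2]
      simp
    have hb : ∀ q, (γ.1 q : ℕ) - (Pi.single i j : Fin (d+1) → ℕ) q < n - j + 1 := fun q =>
      Nat.lt_succ_of_le (hsum ▸ (Finset.single_le_sum
        (f := fun q => (γ.1 q : ℕ) - (Pi.single i j : Fin (d+1) → ℕ) q)
        (fun _ _ => Nat.zero_le _) (Finset.mem_univ q)))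
    refine ⟨⟨fun q => ⟨_, hb q⟩, hsum⟩, Finset.mem_univ _, ?_⟩
    apply Subtype.ext; funext q; apply Fin.ext
    have := hs q
    simp only
    omega

lemma prod_count {M : Type*} [CommMonoid M] (n d : ℕ) (i : Fin (d + 1)) (f : ℕ → M) :
    ∏ β : Comp n (d + 1), ∏ j ∈ Finset.Icc 1 (β.1 i : ℕ), f j =
      ∏ j ∈ Finset.Icc 1 n, f j ^ ((n - j + d).choose d) := by
  rw [Finset.prod_comm' (t' := Finset.Icc 1 n)
    (s' := fun j => Finset.univ.filter fun β : Comp n (d + 1) => j ≤ (β.1 i : ℕ))]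
  · refine Finset.prod_congr rfl fun j hj => ?_
    rw [Finset.prod_const, card_ge n d j (Finset.mem_Icc.1 hj).2]
  · intro β j
    have := (β.1 i).2
    simp
    omega

lemma sum_t (n d : ℕ) : ∑ β : Comp n (d + 1), ∑ i, t β i = d * (n + d).choose (d + 1) := by
  rw [Finset.sum_comm]
  have : ∀ i : Fin d, ∑ β : Comp n (d + 1), t β i = (n + d).choose (d + 1) := by
    intro i
    have h := prod_count n d i.castSucc (fun _ => Multiplicative.ofAdd (1 : ℕ))
    have h2 := congrArg Multiplicative.toAdd h
    simp [toAdd_prod] at h2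
    simp only [t]
    rw [h2, hockey]
  simp [this]

lemma det_one {F : Type*} [Field F] [CharZero F] (n d : ℕ) :
    Matrix.det (Matrix.of fun α β : Comp n (d + 1) =>
      E (F := F) (t β) (fun i => (t α i : F))) = 1 := by
  rw [det_diag_tri (fun α => ((∑ i, t α i : ℕ) : ℤ))]
  · simp [E, bch_nat]
  · intro α β hne hle
    simp only [Matrix.of_apply, E, bch_nat]
    by_contra hcon
    apply hne
    apply t_inj
    have h1 : ∀ i, t β i ≤ t α i := by
      intro i
      by_contra hlt
      apply hcon
      apply Finset.prod_eq_zero (Finset.mem_univ i)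
      rw [Nat.choose_eq_zero_of_lt (by omega)]; simp
    have h2 : ∑ i, t α i ≤ ∑ i, t β i := by exact_mod_cast hle
    have h3 := (Finset.sum_eq_sum_iff_of_le (fun i _ => h1 i)).1
      (le_antisymm (Finset.sum_le_sum fun i _ => h1 i) h2)
    funext i
    exact (h3 i (Finset.mem_univ i)).symm

lemma main {F : Type*} [Field F] [CharZero F] (n d : ℕ)
    (x : Fin (d + 1) → F) (l : F) :
    Matrix.det (Matrix.of fun α β : Comp n (d + 1) =>
        ∏ i, bch (x i + l * ((α.1 i : ℕ) : F)) ((β.1 i : ℕ))) =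
      l ^ (d * (n + d).choose (d + 1)) *
        ∏ i ∈ Finset.Icc 1 n,
          (((∑ j, x j) + (l - 1) * (n : F) + (i : F)) / (i : F)) ^
            ((n - i + d).choose d) := by
  have h1 := det_tri (F := F) (I := Comp n (d + 1)) (fun β => ((∑ i, t β i : ℕ) : ℤ))
    (fun β y => E (t β) y * bch ((∑ j, x j) + l * n - ∑ i, y i) (β.1 (Fin.last d) : ℕ))
    (fun β => E (t β))
    (fun β => bch ((∑ j, x j) + l * n - ((∑ i, t β i : ℕ) : F)) (β.1 (Fin.last d) : ℕ))
    (by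
      intro β
      refine Submodule.span_mono ?_ (span1 ((∑ j, x j) + l * n) (t β) (β.1 (Fin.last d) : ℕ))
      rintro _ ⟨δ, ⟨ha, hb⟩, rfl⟩
      rw [t_sum] at hb
      obtain ⟨γ, rfl⟩ := t_surj δ hb
      exact ⟨γ, by simpa using (by exact_mod_cast ha), rfl⟩)
    (fun α i => x i.castSucc + l * (t α i : F))
  have h2 := det_tri (F := F) (I := Comp n (d + 1)) (fun β => - ((∑ i, t β i : ℕ) : ℤ))
    (fun β (a : Fin d → F) => E (t β) (fun i => x i.castSucc + l * a i))
    (fun β => E (t β))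
    (fun β => l ^ (∑ i, t β i))
    (by
      intro β
      refine Submodule.span_mono ?_ (span2 (fun i => x i.castSucc) l _ (t β) rfl)
      rintro _ ⟨δ, ha, rfl⟩
      have ha : ∑ i, δ i < ∑ i, t β i := ha
      obtain ⟨γ, rfl⟩ := t_surj (n := n) δ (by have := t_sum β; omega)
      refine ⟨γ, ?_, rfl⟩
      simp only [Set.mem_ofPred_eq]
      omega)
    (fun α i => (t α i : F))
  rw [det_one, mul_one] at h2
  rw [h2] at h1
  rw [Finset.prod_pow_eq_pow_sum, sum_t] at h1
  have h3 : ∏ β : Comp n (d + 1),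
      bch ((∑ j, x j) + l * n - ((∑ i, t β i : ℕ) : F)) (β.1 (Fin.last d) : ℕ) =
      ∏ i ∈ Finset.Icc 1 n, (((∑ j, x j) + (l - 1) * (n : F) + (i : F)) / (i : F)) ^
            ((n - i + d).choose d) := by
    rw [← prod_count n d (Fin.last d)]
    refine Finset.prod_congr rfl fun β _ => ?_
    rw [← bch_eq_prod]
    congr 1
    have := congrArg (Nat.cast : ℕ → F) (t_sum β)
    rw [Nat.cast_add] at this
    linear_combination -this
  rw [h3] at h1
  rw [mul_comm, ← h1]
  congr 1
  ext α β
  simp only [Matrix.of_apply]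
  rw [Fin.prod_univ_castSucc]
  congr 2
  have := congrArg (Nat.cast : ℕ → F) (t_sum α)
  push_cast at this
  rw [Fin.sum_univ_castSucc, Finset.sum_add_distrib, ← Finset.mul_sum]
  linear_combination l * this

end Stmt8Aux

theorem stmt8 {F : Type*} [Field F] [CharZero F] (n k : ℕ) (hn : 0 < n) (hk : 0 < k)
    (x : Fin k → F) (l : F) :
    Matrix.det (Matrix.of fun α β : Comp n k =>
        ∏ i, bch (x i + l * ((α.1 i : ℕ) : F)) ((β.1 i : ℕ))) =
      l ^ ((k - 1) * (n + k - 1).choose k) *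
        ∏ i ∈ Finset.Icc 1 n,
          (((∑ j, x j) + (l - 1) * (n : F) + (i : F)) / (i : F)) ^
            ((n + k - i - 1).choose (k - 1)) := by
  obtain ⟨d, rfl⟩ : ∃ d, k = d + 1 := ⟨k - 1, by omega⟩
  rw [Stmt8Aux.main]
  have h1 : n + (d + 1) - 1 = n + d := by omega
  rw [h1, Nat.add_sub_cancel]
  congr 1
  refine Finset.prod_congr rfl fun i hi => ?_
  have := Finset.mem_Icc.1 hi
  have h2 : n + (d + 1) - i - 1 = n - i + d := by omega
  rw [h2]
end

section
/- For a vector of indeterminates x = (x_1,...,x_k), an indeterminate λ, and positive integers n, k, the determinant of the matrix indexed by compositions α, β of n into k non-negative parts, with entry ∏_{i=1}^k (x_i+λα_i)^{β_i}, equals λ^{(k-1)·binom(n+k-1,k)} · (|x|+λn)^{binom(n+k-1,k)} · ∏_{i=1}^n i^{(k-1)·binom(n+k-i-1,k-1)}, where |x| = x_1+···+x_k. -/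
open Finset

namespace PCD

/-- Determinant of a matrix that is triangular with respect to a rank function. -/
lemma det_tri {ι F : Type*} [Fintype ι] [DecidableEq ι] [Field F] (M : Matrix ι ι F) (r : ι → ℕ)
    (h : ∀ i j, M i j ≠ 0 → i = j ∨ r i < r j) : M.det = ∏ i, M i i := by
  rw [Matrix.det_apply]
  rw [Finset.sum_eq_single (1 : Equiv.Perm ι)]
  · simp
  · intro σ _ hσ
    have : ∃ i, M (σ i) i = 0 := by
      by_contra hcon
      push Not at hcon
      have hle : ∀ i ∈ (Finset.univ : Finset ι), r (σ i) ≤ r i := by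
        intro i _
        rcases h _ _ (hcon i) with h1 | h1
        · rw [h1]
        · exact h1.le
      have hs : ∑ i, r (σ i) = ∑ i, r i := Equiv.sum_comp σ r
      have heq := (Finset.sum_eq_sum_iff_of_le hle).1 hs
      apply hσ
      ext i
      rcases h _ _ (hcon i) with h1 | h1
      · simpa using h1
      · have := heq i (Finset.mem_univ i); omega
    obtain ⟨i, hi⟩ := this
    rw [Finset.prod_eq_zero (f := fun i => M (σ i) i) (Finset.mem_univ i) hi, smul_zero]
  · intro h; exact absurd (Finset.mem_univ _) h

lemma det_change {ι F : Type*} [Fintype ι] [DecidableEq ι] [Field F] (u v : ι → ι → F) (r : ι → ℕ)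
    (h : ∀ b, u b - v b ∈ Submodule.span F (v '' {c | r c < r b})) :
    Matrix.det (Matrix.of fun a b => u b a) = Matrix.det (Matrix.of fun a b => v b a) := by
  classical
  have h2 : ∀ b, ∃ c : ι → F, (∀ i, c i ≠ 0 → r i < r b) ∧ u b - v b = ∑ i, c i • v i := by
    intro b
    obtain ⟨c, hc⟩ := (Fintype.mem_span_image_iff_exists_fun F).1 (h b)
    refine ⟨fun i => if hi : r i < r b then c ⟨i, hi⟩ else 0, ?_, ?_⟩
    · intro i hi
      by_contra hcon
      simp [hcon] at hi
    · rw [← hc]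
      symm
      rw [← Finset.sum_subset (Finset.subset_univ (Finset.univ.filter fun i => r i < r b))]
      · rw [Finset.sum_subtype (p := fun i => i ∈ {c | r c < r b}) _ (by simp)]
        apply Finset.sum_congr rfl
        rintro ⟨i, hi⟩ _
        have : r i < r b := hi
        simp [this]
      · intro i _ hi
        have : ¬ r i < r b := by simpa using hi
        simp [this]
  choose c hc1 hc2 using h2
  have hM : (Matrix.of fun a b => u b a) =
      (Matrix.of fun a b => v b a) * (Matrix.of fun i b => (if i = b then 1 else 0) + c b i) := by
    ext a b
    have := congrFun (hc2 b) a
    simp only [Pi.sub_apply, Finset.sum_apply, Pi.smul_apply, smul_eq_mul] at this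
    simp only [Matrix.of_apply, Matrix.mul_apply, mul_add, Finset.sum_add_distrib]
    simp only [mul_ite, mul_one, mul_zero, Finset.sum_ite_eq', Finset.mem_univ, if_true]
    rw [sub_eq_iff_eq_add.1 this, add_comm]
    congr 1
    exact Finset.sum_congr rfl fun i _ => mul_comm _ _
  rw [hM, Matrix.det_mul]
  have hc0 : ∀ i, c i i = 0 := by
    intro i
    by_contra hcon
    exact lt_irrefl _ (hc1 i i hcon)
  rw [det_tri (Matrix.of fun i b => (if i = b then 1 else 0) + c b i) r]
  · simp [hc0]
  · intro i j hij
    by_cases e : i = j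
    · exact Or.inl e
    · right
      apply hc1
      simpa [e] using hij

section alg
variable {F A : Type*} [Field F] [CommRing A] [Algebra F A] {m : ℕ}

/-- monomials -/
def mon (y : Fin m → A) (c : Fin m → ℕ) : A := ∏ i, y i ^ c i

lemma mon_add (y : Fin m → A) (c d : Fin m → ℕ) : mon y (c + d) = mon y c * mon y d := by
  simp [mon, pow_add, Finset.prod_mul_distrib]

lemma mon_single (y : Fin m → A) (i : Fin m) : mon y (Pi.single i 1) = y i := by
  rw [mon, Finset.prod_eq_single i]
  · simp
  · intro j _ hj; simp [hj]
  · simp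

lemma mul_span {S T : Set A} {x : A} (z : A) (hx : x ∈ Submodule.span F S)
    (h : ∀ s ∈ S, z * s ∈ T) : z * x ∈ Submodule.span F T := by
  induction hx using Submodule.span_induction with
  | mem s hs => exact Submodule.subset_span (h s hs)
  | zero => simp
  | add a b _ _ ha hb => rw [mul_add]; exact add_mem ha hb
  | smul c a _ ha => rw [mul_smul_comm]; exact Submodule.smul_mem _ _ ha

lemma step1 (y : Fin m → A) (s : A) (b : ℕ) :
    (s - ∑ i, y i) ^ b - s ^ b ∈ Submodule.span F
      {z | ∃ (c : Fin m → ℕ) (e : ℕ), (∑ i, c i) + e = b ∧ e < b ∧ z = mon y c * s ^ e} := by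
  induction b with
  | zero => simp
  | succ b ih =>
    have : (s - ∑ i, y i) ^ (b+1) - s ^ (b+1) = s * ((s - ∑ i, y i) ^ b - s ^ b)
      - ∑ i, y i * ((s - ∑ i, y i) ^ b - s ^ b) - ∑ i, y i * s ^ b := by
      rw [← Finset.sum_mul, ← Finset.sum_mul]; ring
    rw [this]
    refine sub_mem (sub_mem ?_ (sum_mem fun i _ => ?_)) (sum_mem fun i _ => ?_)
    · refine mul_span _ ih ?_
      rintro _ ⟨c, e, h1, h2, rfl⟩
      exact ⟨c, e+1, by omega, by omega, by ring⟩
    · refine mul_span _ ih ?_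
      rintro _ ⟨c, e, h1, h2, rfl⟩
      refine ⟨Pi.single i 1 + c, e, ?_, by omega, by rw [mon_add, mon_single]; ring⟩
      simp [Finset.sum_add_distrib]; omega
    · apply Submodule.subset_span
      exact ⟨Pi.single i 1, b, by simp [add_comm], by omega, by rw [mon_single]⟩

/-- Filtration by degree -/
def W (F : Type*) [Field F] {A : Type*} [CommRing A] [Algebra F A] {m : ℕ} (y : Fin m → A) (d : ℕ) :
    Submodule F A :=
  Submodule.span F {z | ∃ c : Fin m → ℕ, (∑ i, c i) < d ∧ z = mon y c}

/-- `u` has leading monomial `a`. -/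
def Lead (F : Type*) [Field F] {A : Type*} [CommRing A] [Algebra F A] {m : ℕ} (y : Fin m → A)
    (u : A) (a : Fin m → ℕ) : Prop :=
  u - mon y a ∈ W F y (∑ i, a i)

lemma lead_step (y : Fin m → A) (u : A) (a : Fin m → ℕ) (i : Fin m) (c : F)
    (h : Lead F y u a) : Lead F y (u * (y i - algebraMap F A c)) (a + Pi.single i 1) := by
  have hsum : ∑ j, (a + Pi.single i 1 : Fin m → ℕ) j = (∑ j, a j) + 1 := by
    simp [Finset.sum_add_distrib]
  unfold Lead at *
  rw [hsum, mon_add, mon_single]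
  have : u * (y i - algebraMap F A c) - mon y a * y i =
    y i * (u - mon y a) - c • (u - mon y a) - c • mon y a := by
    rw [Algebra.smul_def, Algebra.smul_def]; ring
  rw [this]
  have hmono : W F y (∑ j, a j) ≤ W F y ((∑ j, a j) + 1) := by
    apply Submodule.span_mono
    rintro _ ⟨c, h1, h2⟩
    exact ⟨c, by omega, h2⟩
  refine sub_mem (sub_mem ?_ (Submodule.smul_mem _ _ (hmono h))) (Submodule.smul_mem _ _ ?_)
  · refine mul_span _ h ?_
    rintro _ ⟨c, h1, rfl⟩
    refine ⟨Pi.single i 1 + c, ?_, by rw [mon_add, mon_single]⟩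
    simp [Finset.sum_add_distrib]; omega
  · exact Submodule.subset_span ⟨a, by omega, rfl⟩

lemma lead_step' (y : Fin m → A) (u : A) (a : Fin m → ℕ) (i : Fin m) (c : ℕ → F) (t : ℕ)
    (h : Lead F y u a) :
    Lead F y (u * ∏ j ∈ range t, (y i - algebraMap F A (c j))) (a + Pi.single i t) := by
  induction t with
  | zero => simpa using h
  | succ t ih =>
    rw [Finset.prod_range_succ, ← mul_assoc, Pi.single_add, ← add_assoc]
    exact lead_step y _ _ i (c t) ih

lemma lead_prod (y : Fin m → A) (a : Fin m → ℕ) (c : Fin m → ℕ → F) :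
    Lead F y (∏ i, ∏ j ∈ range (a i), (y i - algebraMap F A (c i j))) a := by
  have : ∀ s : Finset (Fin m), Lead F y
      (∏ i ∈ s, ∏ j ∈ range (a i), (y i - algebraMap F A (c i j)))
      (∑ i ∈ s, Pi.single i (a i)) := by
    intro s
    induction s using Finset.induction_on with
    | empty => simp [Lead, mon]
    | insert i s hi ih =>
      rw [Finset.prod_insert hi, Finset.sum_insert hi, mul_comm, add_comm]
      exact lead_step' y _ _ i (c i) (a i) ih
  have h := this Finset.univ
  rwa [Finset.univ_sum_single] at h

end alg

/-- Build a composition. -/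
def mk {n k : ℕ} (g : Fin k → ℕ) (h : ∑ i, g i = n) : Comp n k :=
  ⟨fun i => ⟨g i, by
    have := Finset.single_le_sum (f := g) (fun _ _ => Nat.zero_le _) (Finset.mem_univ i)
    omega⟩, h⟩

lemma card_ge (n m t : ℕ) (i : Fin (m+1)) (ht : t ≤ n) :
    (Finset.univ.filter fun γ : Comp n (m+1) => t ≤ (γ.1 i : ℕ)).card = (n - t + m).choose m := by
  have e : {γ : Comp n (m+1) // t ≤ (γ.1 i : ℕ)} ≃ {P : Fin (m+1) → ℕ // ∑ i, P i = n - t} :=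
    { toFun := fun γ => ⟨fun j => (γ.1.1 j : ℕ) - (Pi.single i t : Fin (m+1) → ℕ) j, by
        have h1 : ∑ j, ((γ.1.1 j : ℕ) - (Pi.single i t : Fin (m+1) → ℕ) j)
            + ∑ j, (Pi.single i t : Fin (m+1) → ℕ) j = n := by
          rw [← Finset.sum_add_distrib]
          refine Eq.trans (Finset.sum_congr rfl fun j _ => ?_) γ.1.2
          apply Nat.sub_add_cancel
          by_cases hj : j = i
          · subst hj; simpa using γ.2
          · simp [hj]
        rw [Finset.sum_pi_single'] at h1
        simp only [Finset.mem_univ, if_true] at h1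
        show ∑ j, ((γ.1.1 j : ℕ) - (Pi.single i t : Fin (m+1) → ℕ) j) = n - t
        omega⟩
      invFun := fun P => ⟨mk (fun j => P.1 j + (Pi.single i t : Fin (m+1) → ℕ) j) (by
        rw [Finset.sum_add_distrib, P.2]; simp; omega), by simp [mk]⟩
      left_inv := by
        rintro ⟨⟨γ, h⟩, hγ⟩
        ext j
        simp only [mk]
        apply Nat.sub_add_cancel
        by_cases hj : j = i
        · subst hj; simpa using hγ
        · simp [hj]
      right_inv := by
        rintro ⟨P, h⟩
        ext j
        simp [mk] }
  rw [← Fintype.card_subtype, Fintype.card_congr (e.trans (Sym.equivNatSumOfFintype _ _).symm),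
    Sym.card_sym_eq_choose, Fintype.card_fin]
  rw [show m + 1 + (n - t) - 1 = n - t + m by omega]
  exact Nat.choose_symm_add

lemma sum_part (n m : ℕ) (i : Fin (m+1)) :
    ∑ γ : Comp n (m+1), (γ.1 i : ℕ) = (n + m).choose (m+1) := by
  have h1 : ∀ γ : Comp n (m+1), (γ.1 i : ℕ) = ∑ t ∈ range n, if t + 1 ≤ (γ.1 i : ℕ) then 1 else 0 := by
    intro γ
    rw [← Finset.sum_filter, Finset.sum_const, smul_eq_mul, mul_one]
    have : (range n).filter (fun t => t + 1 ≤ (γ.1 i : ℕ)) = range (γ.1 i : ℕ) := by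
      ext t
      have := (γ.1 i).2
      simp; omega
    rw [this, card_range]
  rw [Finset.sum_congr rfl fun γ _ => h1 γ, Finset.sum_comm]
  have h2 : ∀ t ∈ range n, (∑ γ : Comp n (m+1), if t + 1 ≤ (γ.1 i : ℕ) then 1 else 0)
      = (n - 1 - t + m).choose m := by
    intro t ht
    have := Finset.mem_range.1 ht
    rw [← Finset.sum_filter, Finset.sum_const, smul_eq_mul, mul_one, card_ge _ _ _ _ (by omega)]
    congr 1; omega
  rw [Finset.sum_congr rfl h2, Finset.sum_range_reflect (fun t => (t + m).choose m)]
  cases n with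
  | zero => simp
  | succ n => rw [Nat.sum_range_add_choose]; congr 1; omega

lemma prod_fact {F : Type*} [Field F] (n m : ℕ) (i : Fin (m+1)) :
    ∏ γ : Comp n (m+1), (((γ.1 i : ℕ).factorial : ℕ) : F) =
      ∏ t ∈ Finset.Icc 1 n, (t : F) ^ ((n - t + m).choose m) := by
  have h1 : ∀ γ : Comp n (m+1), (((γ.1 i : ℕ).factorial : ℕ) : F)
      = ∏ t ∈ Finset.Icc 1 n, if t ≤ (γ.1 i : ℕ) then (t : F) else 1 := by
    intro γ
    rw [← Finset.prod_filter, ← Finset.prod_Ico_id_eq_factorial, Nat.cast_prod]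
    refine Finset.prod_congr ?_ fun _ _ => rfl
    ext t
    have := (γ.1 i).2
    simp; omega
  rw [Finset.prod_congr rfl fun γ _ => h1 γ, Finset.prod_comm]
  refine Finset.prod_congr rfl fun t ht => ?_
  rw [← Finset.prod_filter, Finset.prod_const, card_ge _ _ _ _ (Finset.mem_Icc.1 ht).2]

lemma newton_eval {F : Type*} [Field F] (x l : F) (a t : ℕ) :
    ∏ j ∈ range t, (x + l * (a : F) - (x + l * (j : F))) = l ^ t * (a.descFactorial t : F) := by
  induction t with
  | zero => simp
  | succ t ih =>
    rw [Finset.prod_range_succ, ih, Nat.descFactorial_succ]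
    rcases le_or_gt t a with h | h
    · push_cast [Nat.cast_sub h]; ring
    · rw [Nat.descFactorial_of_lt h]; simp

lemma main {F : Type*} [Field F] [CharZero F] (n m : ℕ)
    (x : Fin (m+1) → F) (l : F) :
    Matrix.det (Matrix.of fun α β : Comp n (m+1) =>
        ∏ i, (x i + l * ((α.1 i : ℕ) : F)) ^ ((β.1 i : ℕ))) =
      l ^ (m * (n + m).choose (m+1)) *
        ((∑ j, x j) + l * (n : F)) ^ ((n + m).choose (m+1)) *
        ∏ i ∈ Finset.Icc 1 n, (i : F) ^ (m * (n - i + m).choose m) := by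
  classical
  set S : F := (∑ j, x j) + l * (n : F) with hS
  let Y : Fin m → Comp n (m+1) → F := fun i α => x i.castSucc + l * ((α.1 i.castSucc : ℕ) : F)
  let s : Comp n (m+1) → F := fun _ => S
  let p : Comp n (m+1) → Fin m → ℕ := fun β i => (β.1 i.castSucc : ℕ)
  let q : Comp n (m+1) → ℕ := fun β => (β.1 (Fin.last m) : ℕ)
  have hpq : ∀ β, ∑ i, p β i + q β = n := by
    intro β
    have := β.2
    rwa [Fin.sum_univ_castSucc] at this
  have hlast : ∀ α : Comp n (m+1), x (Fin.last m) + l * ((α.1 (Fin.last m) : ℕ) : F) =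
      (s - ∑ i, Y i) α := by
    intro α
    have h1 : ((∑ i, (α.1 i : ℕ) : ℕ) : F) = n := by rw [α.2]
    rw [Fin.sum_univ_castSucc] at h1
    push_cast at h1
    simp only [Pi.sub_apply, Finset.sum_apply, Y, s, hS, Finset.sum_add_distrib,
      Fin.sum_univ_castSucc x, ← Finset.mul_sum, ← h1]
    ring
  have hmonp : ∀ (c : Fin m → ℕ) α, mon Y c α = ∏ i, Y i α ^ c i := by
    intro c α; simp [mon, Finset.prod_apply]
  have e1 : (Matrix.of fun α β : Comp n (m+1) =>
        ∏ i, (x i + l * ((α.1 i : ℕ) : F)) ^ ((β.1 i : ℕ))) =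
      Matrix.of fun α β => (mon Y (p β) * (s - ∑ i, Y i) ^ q β) α := by
    ext α β
    simp only [Matrix.of_apply, Fin.prod_univ_castSucc, hlast, Pi.mul_apply, Pi.pow_apply, hmonp]
    rfl
  rw [e1, det_change (fun β => mon Y (p β) * (s - ∑ i, Y i) ^ q β)
    (fun β => mon Y (p β) * s ^ q β) q]
  swap
  · intro b
    rw [← mul_sub]
    refine mul_span _ (step1 Y s (q b)) ?_
    rintro _ ⟨c, e, h1, h2, rfl⟩
    refine ⟨mk (Fin.snoc (α := fun _ => ℕ) (p b + c) e) ?_, ?_, ?_⟩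
    · have := hpq b
      simp [Fin.sum_univ_castSucc, Finset.sum_add_distrib]; omega
    · show (Fin.snoc (α := fun _ => ℕ) (p b + c) e : Fin (m+1) → ℕ) (Fin.last m) < q b
      rw [Fin.snoc_last]; exact h2
    · have : p (mk (n := n) (Fin.snoc (α := fun _ => ℕ) (p b + c) e) (by
        have := hpq b
        simp [Fin.sum_univ_castSucc, Finset.sum_add_distrib]; omega)) = p b + c := by
        ext i; simp [p, mk]
      simp only [this, mon_add, mul_assoc]
      simp [q, mk]
  have e2 : (Matrix.of fun α β => (mon Y (p β) * s ^ q β) α) =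
      Matrix.of fun α β => S ^ q β * (Matrix.of fun α β => mon Y (p β) α) α β := by
    ext α β
    simp [s, mul_comm]
  rw [e2, Matrix.det_mul_row]
  rw [← det_change (fun β => ∏ i, ∏ j ∈ range (p β i),
      (Y i - algebraMap F _ (x i.castSucc + l * (j : F))))
    (fun β => mon Y (p β)) (fun β => ∑ i, p β i)]
  swap
  · intro b
    have := lead_prod (F := F) Y (p b) (fun i j => x i.castSucc + l * (j : F))
    refine Submodule.span_mono ?_ this
    rintro _ ⟨c, h1, rfl⟩
    have hsum : ∑ i, (Fin.snoc (α := fun _ => ℕ) c (n - ∑ i, c i) : Fin (m+1) → ℕ) i = n := by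
      have := hpq b
      simp [Fin.sum_univ_castSucc]; omega
    have hp : p (mk _ hsum) = c := by
      ext i; simp [p, mk]
    refine ⟨mk _ hsum, ?_, ?_⟩
    · simpa [hp] using h1
    · simp [hp]
  have e3 : (Matrix.of fun α β => (∏ i, ∏ j ∈ range (p β i),
      (Y i - algebraMap F (Comp n (m+1) → F) (x i.castSucc + l * (j : F)))) α) =
      Matrix.of fun α β => ∏ i, (l ^ p β i * ((p α i).descFactorial (p β i) : F)) := by
    ext α β
    simp only [Matrix.of_apply, Finset.prod_apply, Pi.sub_apply, Pi.algebraMap_apply]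
    refine Finset.prod_congr rfl fun i _ => ?_
    exact newton_eval _ _ _ _
  rw [e3, ← Matrix.det_transpose, det_tri _ (fun β => ∑ i, p β i)]
  swap
  · intro β α h
    simp only [Matrix.transpose_apply, Matrix.of_apply, Finset.prod_ne_zero_iff] at h
    have hle : ∀ i ∈ Finset.univ, p β i ≤ p α i := by
      intro i hi
      by_contra hcon
      apply h i hi
      rw [Nat.descFactorial_of_lt (by omega)]; simp
    rcases (Finset.sum_le_sum hle).lt_or_eq with h1 | h1
    · exact Or.inr h1
    · left
      have h2 := (Finset.sum_eq_sum_iff_of_le hle).1 h1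
      ext i
      refine Fin.lastCases ?_ (fun i => ?_) i
      · have h3 := hpq α
        have h4 := hpq β
        have : q β = q α := by omega
        exact this
      · exact h2 i (Finset.mem_univ i)
  simp only [Matrix.transpose_apply, Matrix.of_apply, Nat.descFactorial_self]
  rw [Finset.prod_pow_eq_pow_sum, sum_part, Finset.prod_comm]
  have e4 : ∀ i : Fin m, ∏ β : Comp n (m+1), (l ^ p β i * ((p β i).factorial : F)) =
      l ^ (n + m).choose (m+1) * ∏ t ∈ Finset.Icc 1 n, (t : F) ^ ((n - t + m).choose m) := by
    intro i
    rw [Finset.prod_mul_distrib, Finset.prod_pow_eq_pow_sum, sum_part, prod_fact]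
  rw [Finset.prod_congr rfl fun i _ => e4 i, Finset.prod_const, Finset.card_univ, Fintype.card_fin,
    mul_pow, ← pow_mul, ← Finset.prod_pow]
  simp only [← pow_mul, mul_comm _ m]
  ring

end PCD

theorem stmt11 {F : Type*} [Field F] [CharZero F] (n k : ℕ) (hn : 0 < n) (hk : 0 < k)
    (x : Fin k → F) (l : F) :
    Matrix.det (Matrix.of fun α β : Comp n k =>
        ∏ i, (x i + l * ((α.1 i : ℕ) : F)) ^ ((β.1 i : ℕ))) =
      l ^ ((k - 1) * (n + k - 1).choose k) *
        ((∑ j, x j) + l * (n : F)) ^ ((n + k - 1).choose k) *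
        ∏ i ∈ Finset.Icc 1 n, (i : F) ^ ((k - 1) * (n + k - i - 1).choose (k - 1)) := by
  obtain ⟨m, rfl⟩ : ∃ m, k = m + 1 := ⟨k - 1, by omega⟩
  rw [PCD.main, show n + (m + 1) - 1 = n + m by omega, show m + 1 - 1 = m by omega]
  congr 1
  refine Finset.prod_congr rfl fun i hi => ?_
  have := (Finset.mem_Icc.1 hi).2
  rw [show n + (m + 1) - i - 1 = n - i + m by omega]
end
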